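/- arXiv:2101.01458 — 4 statements merged into one kernel-verified Lean document; each statement's English description precedes it below -/
import Mathlib

section
/- Let $G$ be an infinite countable discrete group, $\mathcal{T}$ a finite tiling of $G$ with set of shapes $\mathcal{S}_{\mathcal{T}}$, and set $K = \bigcup_{S \in \mathcal{S}_{\mathcal{T}}} S$. Then for every $g \in G$ and every nonempty finite subset $F$ of $G$, $F \setminus K B(F,K) \subset \bigcup_{T \in \mathcal{T}g,\, T \subset F} T$; that is, every element of $F$ not belonging to $K B(F,K)$ lies in some $\mathcal{T}g$-tile entirely contained in $F$. -/
open Set Filter Topology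
open scoped ENNReal NNReal symmDiff

/-- Right translate `S·c = {s * c : s ∈ S}` of a subset of a group. -/
def rightTranslate {G : Type*} [Group G] (S : Set G) (c : G) : Set G := (fun s => s * c) '' S

/-- The boundary set `B(F,T) = {g ∈ G : Tg ∩ F ≠ ∅ and Tg ∩ (G \ F) ≠ ∅}`. -/
def Bset {G : Type*} [Group G] (F T : Set G) : Set G :=
  {g : G | (rightTranslate T g ∩ F).Nonempty ∧ (rightTranslate T g ∩ Fᶜ).Nonempty}

/-- `F` is `(T,ε)`-invariant: `|B(F,T)| < ε * |F|`. -/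
def IsInvariantSet {G : Type*} [Group G] (F T : Set G) (ε : ℝ) : Prop :=
  ((Bset F T).ncard : ℝ) < ε * (F.ncard : ℝ)

/-- A Følner sequence of nonempty finite subsets of `G`. -/
def IsFolnerSeq {G : Type*} [Group G] (F : ℕ → Set G) : Prop :=
  (∀ n, (F n).Finite ∧ (F n).Nonempty) ∧
    ∀ g : G, Tendsto
      (fun n => ((symmDiff (F n) ((fun x => g * x) '' (F n))).ncard : ℝ) / ((F n).ncard : ℝ))
      atTop (nhds 0)

/-- A countable discrete group is amenable if it admits a Følner sequence. -/
def AmenableGroup (G : Type*) [Group G] : Prop := ∃ F : ℕ → Set G, IsFolnerSeq F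

/-- A tiling of `G`: pairwise disjoint nonempty finite subsets covering `G`. -/
def IsTilingOf {G : Type*} [Group G] (𝒯 : Set (Set G)) : Prop :=
  (∀ T ∈ 𝒯, T.Finite ∧ T.Nonempty) ∧
    (∀ T ∈ 𝒯, ∀ T' ∈ 𝒯, T ≠ T' → Disjoint T T') ∧ ⋃₀ 𝒯 = Set.univ

/-- `𝒮` is a (finite) set of shapes for the tiling `𝒯`. -/
def IsShapeSet {G : Type*} [Group G] (𝒯 𝒮 : Set (Set G)) : Prop :=
  𝒮.Finite ∧ (∀ S ∈ 𝒮, S.Finite ∧ S.Nonempty) ∧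
    ∀ T ∈ 𝒯, ∃ S ∈ 𝒮, ∃ c : G, T = rightTranslate S c

/-- The center of a shape `S` relative to a tiling `𝒯`. -/
def center {G : Type*} [Group G] (𝒯 : Set (Set G)) (S : Set G) : Set G :=
  {c : G | rightTranslate S c ∈ 𝒯}

/-- A syndetic subset: `G = F·A` for some finite `F`. -/
def SyndeticSet {G : Type*} [Group G] (A : Set G) : Prop :=
  ∃ F : Set G, F.Finite ∧ Set.image2 (· * ·) F A = Set.univ

/-- The translation `𝒯g = {Tg : T ∈ 𝒯}` of a tiling. -/
def tilingTranslate {G : Type*} [Group G] (𝒯 : Set (Set G)) (g : G) : Set (Set G) :=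
  (fun T => rightTranslate T g) '' 𝒯

/-- The restriction `𝒯|_F = {T ∩ F : T ∈ 𝒯}`. -/
def tilingRestrict {G : Type*} [Group G] (𝒯 : Set (Set G)) (F : Set G) : Set (Set G) :=
  (fun T => T ∩ F) '' 𝒯

/-- The full `G`-shift: `(σ_g x)_h = x_{hg}`. -/
def shift {G K : Type*} [Group G] (g : G) (x : G → K) : G → K := fun h => x (h * g)

/-- A subshift: a closed shift-invariant subset of `K^G`. -/
def IsSubshift {G : Type*} (K : Type*) [Group G] [TopologicalSpace K]
    (X : Set (G → K)) : Prop :=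
  IsClosed X ∧ ∀ g : G, ∀ x ∈ X, shift g x ∈ X

/-- A weight `α : G → (0,∞)` with `α e = 1` and `∑ α < ∞`, defining the product metric. -/
def IsGoodWeight {G : Type*} [Group G] (α : G → ℝ) : Prop :=
  α 1 = 1 ∧ (∀ g, 0 < α g) ∧ Summable α

/-- The metric `ρ(x,y) = ∑_g α_g d(x_g, y_g)` on `K^G`. -/
noncomputable def rhoMetric {G K : Type*} [Group G] [PseudoMetricSpace K] (α : G → ℝ)
    (x y : G → K) : ℝ :=
  ∑' g : G, α g * dist (x g) (y g)

/-- `ρ_F(x,y) = max_{g ∈ F} ρ(gx, gy)` for finite `F ⊆ G`. -/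
noncomputable def rhoMetricF {G K : Type*} [Group G] [PseudoMetricSpace K] (α : G → ℝ)
    (F : Set G) (x y : G → K) : ℝ :=
  sSup ((fun g => rhoMetric α (shift g x) (shift g y)) '' F)

/-- `d_F(x,y) = max_{g∈F} d(gx, gy)` for an action `φ`. -/
noncomputable def dynDist {G X : Type*} [Group G] [PseudoMetricSpace X]
    (φ : G → X → X) (F : Set G) (x y : X) : ℝ :=
  sSup ((fun g => dist (φ g x) (φ g y)) '' F)

/-- An `ε`-embedding w.r.t. `ρ`: continuous, and `f x = f y → ρ x y < ε`. -/
def IsEpsEmb {X Y : Type*} [TopologicalSpace X] [TopologicalSpace Y]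
    (ρ : X → X → ℝ) (ε : ℝ) (f : X → Y) : Prop :=
  Continuous f ∧ ∀ x y, f x = f y → ρ x y < ε

/-- `Widim_ε(X,ρ) ≤ n`: there is an `ε`-embedding of `X` into (the geometric realization of)
a finite simplicial complex all of whose faces have at most `n+1` vertices. -/
def WidimLE (X : Type*) [TopologicalSpace X] (ρ : X → X → ℝ) (ε : ℝ) (n : ℕ) : Prop :=
  ∃ (N : ℕ) (P : Geometry.SimplicialComplex ℝ (Fin N → ℝ)),
    P.faces.Finite ∧ (∀ s ∈ P.faces, s.card ≤ n + 1) ∧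
      ∃ f : X → P.space, IsEpsEmb ρ ε f

/-- `Widim_ε(X,ρ)`: the minimum dimension of a polyhedron admitting an `ε`-embedding of `X`. -/
noncomputable def widim (X : Type*) [TopologicalSpace X] (ρ : X → X → ℝ) (ε : ℝ) : ℕ∞ :=
  sInf {n : ℕ∞ | ∃ m : ℕ, n = (m : ℕ∞) ∧ WidimLE X ρ ε m}

/-- Covering dimension `≤ n`: every open cover admits an open refinement of multiplicity `≤ n+1`. -/
def DimLE (X : Type*) [TopologicalSpace X] (n : ℕ) : Prop :=
  ∀ 𝒰 : Set (Set X), (∀ U ∈ 𝒰, IsOpen U) → ⋃₀ 𝒰 = Set.univ →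
    ∃ 𝒱 : Set (Set X), (∀ V ∈ 𝒱, IsOpen V) ∧ ⋃₀ 𝒱 = Set.univ ∧
      (∀ V ∈ 𝒱, ∃ U ∈ 𝒰, V ⊆ U) ∧
      ∀ x : X, ({V ∈ 𝒱 | x ∈ V}).Finite ∧ ({V ∈ 𝒱 | x ∈ V}).ncard ≤ n + 1

/-- Topological (covering) dimension, valued in `ℕ∞`. -/
noncomputable def covDim (X : Type*) [TopologicalSpace X] : ℕ∞ :=
  sInf {n : ℕ∞ | ∃ m : ℕ, n = (m : ℕ∞) ∧ DimLE X m}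

/-- Mean dimension of the action `φ` computed along the Følner sequence `F`
(as `sup_{ε>0} limsup_n Widim_ε(X, d_{F_n}) / |F_n|`). -/
noncomputable def mdimAlong {G X : Type*} [Group G] [PseudoMetricSpace X]
    (φ : G → X → X) (F : ℕ → Set G) : ℝ≥0∞ :=
  ⨆ ε : {ε : ℝ // 0 < ε}, Filter.limsup
    (fun n => ((widim X (dynDist φ (F n)) ε.1 : ℕ∞) : ℝ≥0∞) / ((F n).ncard : ℝ≥0∞)) atTop

/-- Mean dimension of a subshift `X ⊆ K^G` computed along the Følner sequence `F`,
with the metric `ρ` induced by the weight `α`. -/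
noncomputable def mdimSubshift {G K : Type*} [Group G] [PseudoMetricSpace K] (α : G → ℝ)
    (X : Set (G → K)) (F : ℕ → Set G) : ℝ≥0∞ :=
  ⨆ ε : {ε : ℝ // 0 < ε}, Filter.limsup
    (fun n => ((widim X (fun x y : X => rhoMetricF α (F n) x.1 y.1) ε.1 : ℕ∞) : ℝ≥0∞) /
      ((F n).ncard : ℝ≥0∞)) atTop

/-- The canonical projection `π_F : K^G → K^F`. -/
def projTo {G K : Type*} (F : Set G) (x : G → K) : F → K := fun g => x g.1

/-- The tripod (cone over three points), realized as the subset of `ℝ³` of points with at most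
one nonzero coordinate, each coordinate lying in `[0,1]`; the ℓ¹-distance on this set is exactly
the graph distance in which each of the three edges has length one. -/
def TripodSet : Set (Fin 3 → ℝ) :=
  {x | (∀ i, x i ∈ Set.Icc (0 : ℝ) 1) ∧ ∀ i j : Fin 3, i ≠ j → x i = 0 ∨ x j = 0}

/-- The graph distance on the tripod (= the ℓ¹-distance of the ambient `ℝ³`). -/
noncomputable def tripodDist (x y : TripodSet) : ℝ := ∑ i, |x.1 i - y.1 i|

/-- The `l^∞`-distance on `P^n` for the tripod `P`. -/
noncomputable def tripodDistInf {n : ℕ} (x y : Fin n → TripodSet) : ℝ :=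
  sSup (Set.range fun i => tripodDist (x i) (y i))

/-! The member of a cover through a point `x ∈ F` lies in some translate `Kc`. Were `Kc` not
contained in `F`, it would meet both `F` and its complement, so that `c ∈ B(F,K)` and
`x ∈ Kc ⊆ K·B(F,K)`. This applies to `𝒯g`, which covers `G` and has the same shapes as `𝒯`. -/

section

variable {G : Type*} [Group G]

theorem rightTranslate_mono {S T : Set G} (h : S ⊆ T) (c : G) :
    rightTranslate S c ⊆ rightTranslate T c :=
  image_mono h

theorem rightTranslate_rightTranslate (S : Set G) (c d : G) :
    rightTranslate (rightTranslate S c) d = rightTranslate S (c * d) := by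
  simp only [rightTranslate, image_image, mul_assoc]

theorem rightTranslate_univ (c : G) : rightTranslate univ c = univ :=
  image_univ_of_surjective (mul_right_surjective c)

theorem sUnion_tilingTranslate (𝒯 : Set (Set G)) (g : G) :
    ⋃₀ tilingTranslate 𝒯 g = rightTranslate (⋃₀ 𝒯) g :=
  image_sUnion.symm

theorem sUnion_tilingTranslate_eq_univ {𝒯 : Set (Set G)} (h𝒯 : ⋃₀ 𝒯 = univ) (g : G) :
    ⋃₀ tilingTranslate 𝒯 g = univ := by
  rw [sUnion_tilingTranslate, h𝒯, rightTranslate_univ]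

theorem IsShapeSet.tilingTranslate {𝒯 𝒮 : Set (Set G)} (h𝒮 : IsShapeSet 𝒯 𝒮) (g : G) :
    IsShapeSet (tilingTranslate 𝒯 g) 𝒮 := by
  obtain ⟨hfin, hshape, htile⟩ := h𝒮
  refine ⟨hfin, hshape, ?_⟩
  rintro _ ⟨T, hT, rfl⟩
  obtain ⟨S, hS, c, rfl⟩ := htile T hT
  exact ⟨S, hS, c * g, rightTranslate_rightTranslate S c g⟩

theorem IsShapeSet.exists_subset_rightTranslate_sUnion {𝒯 𝒮 : Set (Set G)}
    (h𝒮 : IsShapeSet 𝒯 𝒮) {T : Set G} (hT : T ∈ 𝒯) : ∃ c, T ⊆ rightTranslate (⋃₀ 𝒮) c := by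
  obtain ⟨S, hS, c, rfl⟩ := h𝒮.2.2 T hT
  exact ⟨c, rightTranslate_mono (subset_sUnion_of_mem hS) c⟩

theorem rightTranslate_subset_of_notMem_mul_Bset {F K : Set G} {x c : G} (hxF : x ∈ F)
    (hxc : x ∈ rightTranslate K c) (hx : x ∉ image2 (· * ·) K (Bset F K)) :
    rightTranslate K c ⊆ F := by
  by_contra hnot
  obtain ⟨y, hyc, hyF⟩ := not_subset.mp hnot
  have hc : c ∈ Bset F K := ⟨⟨x, hxc, hxF⟩, ⟨y, hyc, hyF⟩⟩
  obtain ⟨k, hk, rfl⟩ := hxc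
  exact hx (mem_image2_of_mem hk hc)

theorem sdiff_subset_union_of_inner_tiles_general {𝒰 : Set (Set G)} {F K : Set G}
    (hcover : F ⊆ ⋃₀ 𝒰) (hK : ∀ U ∈ 𝒰, ∃ c, U ⊆ rightTranslate K c) :
    F \ image2 (· * ·) K (Bset F K) ⊆ ⋃₀ {U ∈ 𝒰 | U ⊆ F} := by
  rintro x ⟨hxF, hx⟩
  obtain ⟨U, hU, hxU⟩ := hcover hxF
  obtain ⟨c, hUc⟩ := hK U hU
  have hcF : rightTranslate K c ⊆ F := rightTranslate_subset_of_notMem_mul_Bset hxF (hUc hxU) hx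
  exact ⟨U, ⟨hU, hUc.trans hcF⟩, hxU⟩

end

/-- **Claim.** Let `𝒯` be a finite tiling of `G` with shape set `𝒮` and put `K = ⋃ 𝒮`. Then
for every `g ∈ G` and every nonempty finite `F ⊆ G`, every element of `F` not in `K·B(F,K)`
lies in some `𝒯g`-tile entirely contained in `F`. -/
theorem sdiff_subset_union_of_inner_tiles (G : Type*) [Group G] [Countable G] [Infinite G]
    (𝒯 𝒮 : Set (Set G)) (ht : IsTilingOf 𝒯) (hs : IsShapeSet 𝒯 𝒮)
    (g : G) (F : Set G) (hF : F.Finite) (hFne : F.Nonempty) :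
    F \ Set.image2 (· * ·) (⋃₀ 𝒮) (Bset F (⋃₀ 𝒮)) ⊆
      ⋃₀ {T' ∈ tilingTranslate 𝒯 g | T' ⊆ F} :=
  sdiff_subset_union_of_inner_tiles_general
    (sUnion_tilingTranslate_eq_univ ht.2.2 g ▸ subset_univ F)
    fun _ => (hs.tilingTranslate g).exists_subset_rightTranslate_sUnion
end

section
/- Let $G$ be an infinite countable discrete group, $K$ a finite dimensional compact metric space, $(X,\sigma)$ a subshift of $(K^G,\sigma)$, and $\epsilon > 0$. Let $A$ be a finite subset of $G$ containing the identity element such that for all $x, y \in K^G$, $x|_A = y|_A$ implies $\rho(x,y) < \epsilon$. Then for every nonempty finite subset $F$ of $G$: (i) the restriction of the projection $\pi_{AF}$ to $X$ is an $\epsilon$-embedding of $(X, \rho_F)$ into $K^{AF}$, hence $\mathrm{Widim}_\epsilon(X,\rho_F) \le \dim(\pi_{AF}(X))$; and (ii) $\dim(\pi_{AF}(X)) \le \dim(\pi_F(X)) + |AF \setminus F| \cdot \dim(K)$, so $\mathrm{Widim}_\epsilon(X,\rho_F) \le \dim(\pi_F(X)) + |AF \setminus F| \cdot \dim(K)$,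 where $\dim$ denotes topological (covering) dimension. -/
open Set Filter Topology
open scoped ENNReal NNReal symmDiff

/-!
Points of `X` that agree on `AF` have shifts by elements of `F` agreeing on `A`, so `π_{AF}` is an
`ε`-embedding for `ρ_F`. An `ε`-embedding of a compact space into a compact Hausdorff space `Z` of
dimension `n` becomes an `ε`-embedding into an `n`-dimensional polyhedron on composing it with a
partition of unity subordinate to a fine cover of `Z` of multiplicity `n + 1`.

The coordinates of `AF \ F` are added to `F` one at a time; each addition embeds the larger
projection in the product of the smaller one with `K`, so the second bound reduces to
`dim (X × Y) ≤ dim X + dim Y`. This follows from Ostrand's coloring theorem: if `dim X ≤ n`, a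
finite open cover has, for every `p`, refinements in `n + p + 1` colors whose members of the same
color are disjoint and such that every point lies in members of at least `p + 1` colors. With
`n + m + 1` colors in total, a point of `X` misses at most `n` of them and a point of `Y` at most
`m`, so the products of sets of equal color cover `X × Y`, with multiplicity at most `n + m + 1`.
-/

/-! ### Covering dimension through indexed families -/

/-- The indexed family `V` has multiplicity at most `k`: each point belongs to `V i` for at most
`k` indices `i`. -/
def MultiplicityLE {ι X : Type*} (V : ι → Set X) (k : ℕ) : Prop :=
  ∀ x, {i | x ∈ V i}.encard ≤ k

namespace MultiplicityLE

variable {ι κ X Y : Type*} {V : ι → Set X} {k : ℕ}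

theorem iUnion_fiber (hV : MultiplicityLE V k) (r : ι → κ) :
    MultiplicityLE (fun j => ⋃ i ∈ r ⁻¹' {j}, V i) k := fun x =>
  calc {j | x ∈ ⋃ i ∈ r ⁻¹' {j}, V i}.encard
      ≤ (r '' {i | x ∈ V i}).encard := encard_le_encard fun j hj => by
        obtain ⟨i, hij, hx⟩ := mem_iUnion₂.1 hj
        exact ⟨i, hx, hij⟩
    _ ≤ {i | x ∈ V i}.encard := encard_image_le r _
    _ ≤ k := hV x

theorem comp_injective (hV : MultiplicityLE V k) {e : κ → ι} (he : Function.Injective e) :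
    MultiplicityLE (V ∘ e) k := fun x =>
  (encard_le_encard_of_injOn (f := e) (t := {i | x ∈ V i}) (fun _ hj => hj) he.injOn).trans (hV x)

theorem preimage (hV : MultiplicityLE V k) (f : Y → X) : MultiplicityLE (fun i => f ⁻¹' V i) k :=
  fun y => hV (f y)

end MultiplicityLE

theorem DimLE.exists_indexed_refinement {ι X : Type*} [TopologicalSpace X] {n : ℕ}
    (hX : DimLE X n) {C : ι → Set X} (hCo : ∀ i, IsOpen (C i)) (hC : ⋃ i, C i = univ) :
    ∃ V : ι → Set X, (∀ i, IsOpen (V i)) ∧ ⋃ i, V i = univ ∧ (∀ i, V i ⊆ C i) ∧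
      MultiplicityLE V (n + 1) := by
  obtain ⟨𝒱, hVo, hV, hVC, hVm⟩ := hX (range C) (forall_mem_range.2 hCo) (by rwa [sUnion_range])
  have exists_index (W : 𝒱) : ∃ i, W.1 ⊆ C i := by
    obtain ⟨_, ⟨i, rfl⟩, hW⟩ := hVC W.1 W.2
    exact ⟨i, hW⟩
  choose r hr using exists_index
  have multiplicity : MultiplicityLE (Subtype.val : 𝒱 → Set X) (n + 1) := fun x => by
    rw [← Subtype.val_injective.injOn.encard_image]
    refine (encard_le_encard ?_).trans (encard_le_coe_iff_finite_ncard_le.2 (hVm x))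
    rintro _ ⟨W, hx, rfl⟩
    exact ⟨W.2, hx⟩
  refine ⟨fun i => ⋃ W ∈ r ⁻¹' {i}, W.1, fun i => isOpen_biUnion fun W _ => hVo W.1 W.2,
    eq_univ_of_forall fun x => ?_, fun i => iUnion₂_subset ?_, multiplicity.iUnion_fiber r⟩
  · obtain ⟨W, hW, hx⟩ := mem_sUnion.1 (hV.symm ▸ mem_univ x)
    exact mem_iUnion.2 ⟨r ⟨W, hW⟩, mem_biUnion (mem_preimage.2 rfl) hx⟩
  · rintro W rfl
    exact hr W

theorem dimLE_of_forall_indexed.{u, v} {X : Type u} [TopologicalSpace X] {n : ℕ}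
    (h : ∀ {ι : Type u} (C : ι → Set X), (∀ i, IsOpen (C i)) → ⋃ i, C i = univ →
      ∃ (κ : Type v) (V : κ → Set X), (∀ j, IsOpen (V j)) ∧ ⋃ j, V j = univ ∧
        (∀ j, ∃ i, V j ⊆ C i) ∧ MultiplicityLE V (n + 1)) :
    DimLE X n := by
  intro 𝒰 h𝒰o h𝒰
  obtain ⟨κ, V, hVo, hV, hVU, hVm⟩ :=
    h (Subtype.val : 𝒰 → Set X) (fun U => h𝒰o U.1 U.2) (by rwa [← sUnion_eq_iUnion])
  refine ⟨range V, forall_mem_range.2 hVo, by rwa [sUnion_range],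
    forall_mem_range.2 fun j => ?_, fun x => ?_⟩
  · obtain ⟨U, hU⟩ := hVU j
    exact ⟨U.1, U.2, hU⟩
  · refine encard_le_coe_iff_finite_ncard_le.1 (le_trans ?_ (hVm x))
    refine (encard_le_encard ?_).trans (encard_image_le V {j | x ∈ V j})
    rintro _ ⟨⟨j, rfl⟩, hx⟩
    exact ⟨j, hx, rfl⟩

theorem DimLE.of_isClosedEmbedding {X Y : Type*} [TopologicalSpace X] [TopologicalSpace Y]
    {n : ℕ} {f : X → Y} (hf : IsClosedEmbedding f) (hY : DimLE Y n) : DimLE X n := by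
  refine dimLE_of_forall_indexed fun {ι} C hCo hC => ?_
  choose O hOo hOC using fun i => hf.isInducing.isOpen_iff.1 (hCo i)
  let D : Option ι → Set Y := fun o => o.elim (range f)ᶜ O
  have hDo : ∀ o, IsOpen (D o) := Option.forall.2 ⟨hf.isClosed_range.isOpen_compl, hOo⟩
  have hD : ⋃ o, D o = univ := eq_univ_of_forall fun y => by
    by_cases hy : y ∈ range f
    · obtain ⟨x, rfl⟩ := hy
      obtain ⟨i, hi⟩ := mem_iUnion.1 (hC.symm ▸ mem_univ x)
      rw [← hOC i] at hi
      exact mem_iUnion.2 ⟨some i, hi⟩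
    · exact mem_iUnion.2 ⟨none, hy⟩
  obtain ⟨V, hVo, hV, hVD, hVm⟩ := hY.exists_indexed_refinement hDo hD
  refine ⟨ι, fun i => f ⁻¹' V (some i), fun i => (hVo _).preimage hf.continuous,
    eq_univ_of_forall fun x => ?_, fun i => ⟨i, ?_⟩,
    (hVm.comp_injective (Option.some_injective ι)).preimage f⟩
  · obtain ⟨_ | i, hi⟩ := mem_iUnion.1 (hV.symm ▸ mem_univ (f x))
    · exact absurd (mem_range_self x) (hVD none hi)
    · exact mem_iUnion.2 ⟨i, hi⟩
  · rw [← hOC i]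
    exact preimage_mono (hVD (some i))

theorem DimLE.covDim_le {X : Type*} [TopologicalSpace X] {n : ℕ} (hX : DimLE X n) :
    covDim X ≤ n :=
  sInf_le ⟨n, rfl, hX⟩

theorem covDim_eq_top_or_exists_dimLE (X : Type*) [TopologicalSpace X] :
    covDim X = ⊤ ∨ ∃ n : ℕ, covDim X = n ∧ DimLE X n := by
  rcases {n : ℕ∞ | ∃ m : ℕ, n = m ∧ DimLE X m}.eq_empty_or_nonempty with hempty | hne
  · exact Or.inl (by rw [covDim, hempty, sInf_empty])
  · exact Or.inr (csInf_mem hne)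

theorem covDim_le_of_isClosedEmbedding {X Y : Type*} [TopologicalSpace X] [TopologicalSpace Y]
    {f : X → Y} (hf : IsClosedEmbedding f) : covDim X ≤ covDim Y := by
  rcases covDim_eq_top_or_exists_dimLE Y with htop | ⟨n, hn, hY⟩
  · exact htop ▸ le_top
  · exact hn ▸ (hY.of_isClosedEmbedding hf).covDim_le

/-! ### Maps to skeleta of simplices -/

theorem DimLE.exists_map_stdSimplex {ι X : Type*} [TopologicalSpace X] [NormalSpace X]
    [Fintype ι] {n : ℕ} (hX : DimLE X n) {C : ι → Set X} (hCo : ∀ i, IsOpen (C i))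
    (hC : ⋃ i, C i = univ) :
    ∃ φ : X → ι → ℝ, Continuous φ ∧ (∀ x, φ x ∈ stdSimplex ℝ ι) ∧
      (∀ x, (Finset.univ.filter fun i => 0 < φ x i).card ≤ n + 1) ∧
      ∀ x i, 0 < φ x i → x ∈ C i := by
  obtain ⟨V, hVo, hV, hVC, hVm⟩ := hX.exists_indexed_refinement hCo hC
  obtain ⟨f, hf⟩ := PartitionOfUnity.exists_isSubordinate_of_locallyFinite isClosed_univ V hVo
    (locallyFinite_of_finite V) hV.ge
  have mem_of_pos {x : X} {i : ι} (hi : 0 < f i x) : x ∈ V i := hf i (subset_tsupport _ hi.ne')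
  refine ⟨fun x i => f i x, continuous_pi fun i => (f i).continuous,
    fun x => ⟨fun i => f.nonneg i x, ?_⟩, fun x => ?_, fun x i hi => hVC i (mem_of_pos hi)⟩
  · rw [← finsum_eq_sum_of_fintype]
    exact f.sum_eq_one (mem_univ x)
  · rw [← Nat.cast_le (α := ℕ∞), ← encard_coe_eq_coe_finsetCard]
    refine (encard_le_encard fun i hi => ?_).trans (hVm x)
    exact mem_of_pos (Finset.mem_filter.1 hi).2

theorem exists_pos_of_mem_stdSimplex {ι : Type*} [Fintype ι] {w : ι → ℝ}
    (hw : w ∈ stdSimplex ℝ ι) : ∃ i, 0 < w i := by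
  obtain ⟨i, -, hi⟩ := Finset.exists_lt_of_sum_lt (s := Finset.univ) (f := fun _ => 0) (g := w)
    (by rw [Finset.sum_const_zero, hw.2]; exact one_pos)
  exact ⟨i, hi⟩

/-- The `n`-skeleton of the standard simplex spanned by the unit vectors of `ℝ^N`. -/
noncomputable def stdSkeleton (N n : ℕ) : Geometry.SimplicialComplex ℝ (Fin N → ℝ) :=
  Geometry.SimplicialComplex.ofAffineIndependent
    { faces := {s | s.Nonempty ∧ (s : Set (Fin N → ℝ)) ⊆ range (Pi.basisFun ℝ (Fin N)) ∧
        s.card ≤ n + 1}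
      isRelLowerSet_faces := fun _ hs => ⟨hs.1, fun _ hts ht =>
        ⟨ht, (Finset.coe_subset.2 hts).trans hs.2.1, (Finset.card_le_card hts).trans hs.2.2⟩⟩ }
    ((Pi.basisFun ℝ (Fin N)).linearIndependent.affineIndependent.range.mono
      (iUnion₂_subset fun _ hs => hs.2.1))

theorem finite_faces_stdSkeleton (N n : ℕ) : (stdSkeleton N n).faces.Finite :=
  ((finite_range (Pi.basisFun ℝ (Fin N))).finite_subsets.preimage
    Finset.coe_injective.injOn).subset fun _ hs => hs.2.1

theorem mem_space_stdSkeleton {N n : ℕ} {w : Fin N → ℝ} (hw : w ∈ stdSimplex ℝ (Fin N))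
    (hcard : (Finset.univ.filter fun i => 0 < w i).card ≤ n + 1) :
    w ∈ (stdSkeleton N n).space := by
  set T := Finset.univ.filter fun i => 0 < w i with hT
  let e := Pi.basisFun ℝ (Fin N)
  have eq_zero_of_notMem : ∀ i ∉ T, w i = 0 := fun i hi =>
    le_antisymm (not_lt.1 fun hpos => hi (by simp [hT, hpos])) (hw.1 i)
  have hsum : ∑ i ∈ T, w i = 1 := by
    rw [← hw.2]
    exact Finset.sum_subset T.subset_univ fun i _ => eq_zero_of_notMem i
  have hcenter : T.centerMass w e = w := by
    rw [Finset.centerMass_eq_of_sum_1 _ _ hsum, Finset.sum_subset T.subset_univ fun i _ hi => by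
      rw [eq_zero_of_notMem i hi, zero_smul]]
    exact (Pi.basisFun ℝ (Fin N)).sum_repr w
  obtain ⟨i, hi⟩ := exists_pos_of_mem_stdSimplex hw
  refine Geometry.SimplicialComplex.mem_space_iff.2 ⟨T.image e, ⟨?_, ?_, ?_⟩, ?_⟩
  · exact ⟨e i, Finset.mem_image_of_mem e (by simp [hT, hi])⟩
  · rw [Finset.coe_image]
    exact image_subset_range e T
  · exact Finset.card_image_le.trans hcard
  · rw [← hcenter]
    exact T.centerMass_mem_convexHull (fun i _ => hw.1 i) (hsum.symm ▸ one_pos)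
      fun i hi => Finset.mem_coe.2 (Finset.mem_image_of_mem e hi)

theorem DimLE.widimLE {X Z : Type*} [TopologicalSpace X] [TopologicalSpace Z] [NormalSpace Z]
    {n N : ℕ} (hZ : DimLE Z n) {f : X → Z} (hf : Continuous f) {ρ : X → X → ℝ} {ε : ℝ}
    {C : Fin N → Set Z} (hCo : ∀ i, IsOpen (C i)) (hC : ⋃ i, C i = univ)
    (hρ : ∀ i x y, f x ∈ C i → f y ∈ C i → ρ x y < ε) : WidimLE X ρ ε n := by
  obtain ⟨φ, hφ, hφmem, hφcard, hφC⟩ := hZ.exists_map_stdSimplex hCo hC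
  refine ⟨N, stdSkeleton N n, finite_faces_stdSkeleton N n, fun _ hs => hs.2.2,
    fun x => ⟨φ (f x), mem_space_stdSkeleton (hφmem _) (hφcard _)⟩,
    (hφ.comp hf).subtype_mk _, fun x y hxy => ?_⟩
  have hφxy : φ (f x) = φ (f y) := congrArg Subtype.val hxy
  obtain ⟨i, hi⟩ := exists_pos_of_mem_stdSimplex (hφmem (f x))
  exact hρ i x y (hφC _ i hi) (hφC _ i (hφxy ▸ hi))

theorem exists_fin_subcover {Z : Type*} [TopologicalSpace Z] [CompactSpace Z] {O : Z → Set Z}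
    (hO : ∀ z, O z ∈ 𝓝 z) : ∃ (N : ℕ) (c : Fin N → Z), ⋃ i, O (c i) = univ := by
  obtain ⟨t, ht⟩ := CompactSpace.elim_nhds_subcover O hO
  obtain ⟨N, c, -, hc⟩ := t.finite_toSet.fin_param
  refine ⟨N, c, ?_⟩
  rw [← biUnion_range (g := O), hc]
  exact ht

theorem IsEpsEmb.exists_isOpen_mem_lt {X Z : Type*} [TopologicalSpace X] [CompactSpace X]
    [TopologicalSpace Z] [T2Space Z] {ρ : X → X → ℝ} {ε : ℝ} {f : X → Z}
    (hf : IsEpsEmb ρ ε f) (hρ : IsOpen {q : X × X | ρ q.1 q.2 < ε}) (z : Z) :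
    ∃ O, IsOpen O ∧ z ∈ O ∧ ∀ x y, f x ∈ O → f y ∈ O → ρ x y < ε := by
  let far : Set (Z × Z) := Prod.map f f '' {q : X × X | ρ q.1 q.2 < ε}ᶜ
  have far_closed : IsClosed far :=
    (hρ.isClosed_compl.isCompact.image (hf.1.prodMap hf.1)).isClosed
  have diag_notMem : (z, z) ∈ farᶜ := by
    rintro ⟨⟨x, y⟩, hxy, heq⟩
    obtain ⟨hx, hy⟩ := Prod.mk.inj heq
    exact hxy (hf.2 x y (hx.trans hy.symm))
  obtain ⟨u, v, hu, hv, hzu, hzv, huv⟩ := isOpen_prod_iff.1 far_closed.isOpen_compl z z diag_notMem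
  refine ⟨u ∩ v, hu.inter hv, ⟨hzu, hzv⟩, fun x y hx hy => ?_⟩
  by_contra hxy
  exact huv (mk_mem_prod hx.1 hy.2) ⟨(x, y), hxy, rfl⟩

theorem IsEpsEmb.widim_le_covDim {X Z : Type*} [TopologicalSpace X] [CompactSpace X]
    [TopologicalSpace Z] [CompactSpace Z] [T2Space Z] {ρ : X → X → ℝ} {ε : ℝ} {f : X → Z}
    (hf : IsEpsEmb ρ ε f) (hρ : IsOpen {q : X × X | ρ q.1 q.2 < ε}) :
    widim X ρ ε ≤ covDim Z := by
  rcases covDim_eq_top_or_exists_dimLE Z with htop | ⟨n, hn, hZ⟩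
  · exact htop ▸ le_top
  choose O hOo hzO hO using hf.exists_isOpen_mem_lt hρ
  obtain ⟨N, c, hc⟩ := exists_fin_subcover fun z => (hOo z).mem_nhds (hzO z)
  exact hn ▸ sInf_le ⟨n, rfl, hZ.widimLE hf.1 (fun i => hOo (c i)) hc fun i => hO (c i)⟩

/-! ### Ostrand's coloring theorem -/

section Coloring

variable {ι κ X : Type*}

/-- The colors `c` for which the point `x` lies in some member of the family `U c`. -/
def colorsAt (U : κ → ι → Set X) (x : X) : Set κ :=
  {c | ∃ i, x ∈ U c i}

theorem colorsAt_mono {U V : κ → ι → Set X} (h : ∀ c i, U c i ⊆ V c i) (x : X) :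
    colorsAt U x ⊆ colorsAt V x :=
  fun c ⟨i, hi⟩ => ⟨i, h c i hi⟩

theorem encard_colorsAt_le_cons {k : ℕ} (W : ι → Set X) (U : Fin k → ι → Set X) (x : X) :
    (colorsAt U x).encard ≤ (colorsAt (Fin.cons W U : Fin (k + 1) → ι → Set X) x).encard :=
  encard_le_encard_of_injOn (f := Fin.succ) (fun _ hc => hc) (Fin.succ_injective k).injOn

theorem encard_colorsAt_add_one_le_cons {k : ℕ} {W : ι → Set X} (U : Fin k → ι → Set X) {x : X}
    {i : ι} (hx : x ∈ W i) :
    (colorsAt U x).encard + 1 ≤ (colorsAt (Fin.cons W U : Fin (k + 1) → ι → Set X) x).encard := by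
  have zero_notMem : (0 : Fin (k + 1)) ∉ Fin.succ '' colorsAt U x :=
    fun ⟨c, _, hc⟩ => Fin.succ_ne_zero c hc
  rw [← (Fin.succ_injective k).encard_image, ← encard_insert_of_notMem zero_notMem]
  refine encard_le_encard (insert_subset ⟨i, hx⟩ ?_)
  rintro _ ⟨c, hc, rfl⟩
  exact hc

/-- For families `V` and `E` with `V c i ⊆ E c i`, the sets of one further color: at the points
that `V` and `E` cover in the same nonempty set `S` of colors, copy a color chosen from `S`. -/
def mergedColor (V E : κ → ι → Set X) (i : ι) : Set X :=
  ⋃ (S : Set κ) (hS : S.Nonempty), {x | S ⊆ colorsAt V x} ∩ {x | colorsAt E x ⊆ S} ∩ V hS.some i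

theorem mem_mergedColor {V E : κ → ι → Set X} (hVE : ∀ c i, V c i ⊆ E c i) {i : ι} {x : X} :
    x ∈ mergedColor V E i ↔ ∃ hx : (colorsAt V x).Nonempty,
      colorsAt V x = colorsAt E x ∧ x ∈ V hx.some i := by
  simp only [mergedColor, mem_iUnion, mem_inter_iff, mem_ofPred_eq]
  constructor
  · rintro ⟨S, hS, ⟨hSV, hES⟩, hx⟩
    have hVE := colorsAt_mono hVE x
    obtain rfl : S = colorsAt V x := hSV.antisymm (hVE.trans hES)
    exact ⟨hS, hVE.antisymm hES, hx⟩
  · rintro ⟨hne, heq, hx⟩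
    exact ⟨_, hne, ⟨Subset.rfl, heq.ge⟩, hx⟩

/-- Where `E` covers in more colors than `V`, so does `U`; elsewhere the merged color is gained. -/
theorem encard_colorsAt_add_one_le_cons_mergedColor {k : ℕ} {U V E : Fin k → ι → Set X}
    (hVE : ∀ c i, V c i ⊆ E c i) (hEU : ∀ c i, E c i ⊆ U c i) {x : X}
    (hx : (colorsAt V x).Nonempty) :
    (colorsAt V x).encard + 1 ≤
      (colorsAt (Fin.cons (mergedColor V E) U : Fin (k + 1) → ι → Set X) x).encard := by
  have hVE' := colorsAt_mono hVE x
  have hEU' := colorsAt_mono hEU x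
  by_cases heq : colorsAt V x = colorsAt E x
  · obtain ⟨i, hi⟩ := hx.some_mem
    calc (colorsAt V x).encard + 1 ≤ (colorsAt U x).encard + 1 := by
          gcongr
          exact hVE'.trans hEU'
      _ ≤ _ := encard_colorsAt_add_one_le_cons U ((mem_mergedColor hVE).2 ⟨hx, heq, hi⟩)
  · calc (colorsAt V x).encard + 1 ≤ (colorsAt E x).encard :=
          Order.add_one_le_of_lt ((toFinite _).encard_lt_encard (hVE'.ssubset_of_ne heq))
      _ ≤ (colorsAt U x).encard := encard_le_encard hEU'
      _ ≤ _ := encard_colorsAt_le_cons _ U x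

variable [TopologicalSpace X]

theorem isOpen_setOf_subset_colorsAt [Finite κ] {U : κ → ι → Set X}
    (hU : ∀ c i, IsOpen (U c i)) (S : Set κ) : IsOpen {x | S ⊆ colorsAt U x} := by
  have heq : {x | S ⊆ colorsAt U x} = ⋂ c ∈ S, ⋃ i, U c i := by
    ext x
    simp only [mem_ofPred_eq, subset_def, colorsAt, mem_iInter, mem_iUnion]
  rw [heq]
  exact S.toFinite.isOpen_biInter fun c _ => isOpen_iUnion (hU c)

theorem isOpen_setOf_colorsAt_subset [Finite κ] [Finite ι] {E : κ → ι → Set X}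
    (hE : ∀ c i, IsClosed (E c i)) (S : Set κ) : IsOpen {x | colorsAt E x ⊆ S} := by
  have heq : {x | colorsAt E x ⊆ S} = ⋂ c ∈ Sᶜ, (⋃ i, E c i)ᶜ := by
    ext x
    simp only [mem_ofPred_eq, subset_def, colorsAt, mem_iInter, mem_compl_iff, mem_iUnion]
    exact forall_congr' fun c => not_imp_not.symm
  rw [heq]
  exact Sᶜ.toFinite.isOpen_biInter fun c _ => (isClosed_iUnion_of_finite (hE c)).isOpen_compl

/-- `U` is an open refinement of `C`, in the form of families `U c` indexed by colors `c`: each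
`U c` consists of pairwise disjoint sets, and each point is covered in at least `p` colors. The
sets of one color keep the index set of `C`, with `U c i ⊆ C i`. -/
structure IsColoredRefinement (C : ι → Set X) (U : κ → ι → Set X) (p : ℕ) : Prop where
  isOpen : ∀ c i, IsOpen (U c i)
  subset : ∀ c i, U c i ⊆ C i
  index_unique : ∀ {c i j x}, x ∈ U c i → x ∈ U c j → i = j
  le_encard_colorsAt : ∀ x, p ≤ (colorsAt U x).encard

theorem IsColoredRefinement.le_ncard_colorsAt [Finite κ] {C : ι → Set X} {U : κ → ι → Set X}
    {p : ℕ} (hU : IsColoredRefinement C U p) (x : X) : p ≤ (colorsAt U x).ncard := by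
  rw [← Nat.cast_le (α := ℕ∞), (toFinite _).cast_ncard_eq]
  exact hU.le_encard_colorsAt x

/-- The open star of the barycenter of the face spanned by `S`, in the barycentric subdivision of
the simplex with vertex set `ι`. -/
def barycentricStar (S : Finset ι) : Set (ι → ℝ) :=
  {w | ∀ i ∈ S, 0 < w i ∧ ∀ j ∉ S, w j < w i}

theorem isOpen_barycentricStar [Finite ι] (S : Finset ι) : IsOpen (barycentricStar S) := by
  have heq : barycentricStar S = ⋂ i ∈ S, {w | 0 < w i} ∩ ⋂ j ∈ (Sᶜ : Set ι), {w | w j < w i} := by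
    ext w
    simp only [barycentricStar, mem_ofPred_eq, mem_iInter, mem_inter_iff, mem_compl_iff,
      Finset.mem_coe]
  rw [heq]
  refine isOpen_biInter_finset fun i _ =>
    (isOpen_lt continuous_const (continuous_apply i)).inter ?_
  exact (toFinite _).isOpen_biInter fun j _ => isOpen_lt (continuous_apply j) (continuous_apply i)

theorem eq_of_mem_barycentricStar {S T : Finset ι} {w : ι → ℝ} (hS : w ∈ barycentricStar S)
    (hT : w ∈ barycentricStar T) (hcard : S.card = T.card) : S = T := by
  by_contra hne
  obtain ⟨a, haS, haT⟩ := Finset.not_subset.1 fun hST =>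
    hne (Finset.eq_of_subset_of_card_le hST hcard.ge)
  obtain ⟨b, hbT, hbS⟩ := Finset.not_subset.1 fun hTS =>
    hne (Finset.eq_of_subset_of_card_le hTS hcard.le).symm
  exact lt_asymm ((hS a haS).2 b hbS) ((hT b hbT).2 a haT)

theorem mem_barycentricStar_support [Fintype ι] (w : ι → ℝ) :
    w ∈ barycentricStar (Finset.univ.filter fun i => 0 < w i) := by
  simp only [barycentricStar, mem_ofPred_eq, Finset.mem_filter, Finset.mem_univ, true_and, not_lt]
  exact fun i hi => ⟨hi, fun j hj => hj.trans_lt hi⟩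

/-- The dimension of the face whose barycentric star is used serves as color. -/
theorem DimLE.exists_isColoredRefinement_one [NormalSpace X] [Finite ι] {n : ℕ} (hX : DimLE X n)
    {C : ι → Set X} (hCo : ∀ i, IsOpen (C i)) (hC : ⋃ i, C i = univ) :
    ∃ U : Fin (n + 1) → ι → Set X, IsColoredRefinement C U 1 := by
  have := Fintype.ofFinite ι
  obtain ⟨φ, hφ, hφmem, hφcard, hφC⟩ := hX.exists_map_stdSimplex hCo hC
  let U : Fin (n + 1) → ι → Set X := fun c i =>
    ⋃ (S : Finset ι) (hS : S.Nonempty) (_ : S.card = c + 1 ∧ hS.choose = i),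
      φ ⁻¹' barycentricStar S
  have mem_U {c i x} : x ∈ U c i ↔ ∃ (S : Finset ι) (hS : S.Nonempty),
      (S.card = c + 1 ∧ hS.choose = i) ∧ φ x ∈ barycentricStar S := by
    simp only [U, mem_iUnion, mem_preimage, exists_prop]
  refine ⟨U, fun c i => ?_, fun c i x hx => ?_, fun {c i j x} hi hj => ?_, fun x => ?_⟩
  · exact isOpen_iUnion fun S => isOpen_iUnion fun _ => isOpen_iUnion fun _ =>
      (isOpen_barycentricStar S).preimage hφ
  · obtain ⟨S, hS, ⟨-, rfl⟩, hxS⟩ := mem_U.1 hx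
    exact hφC x _ (hxS _ hS.choose_spec).1
  · obtain ⟨S, hS, ⟨hScard, rfl⟩, hxS⟩ := mem_U.1 hi
    obtain ⟨T, hT, ⟨hTcard, rfl⟩, hxT⟩ := mem_U.1 hj
    obtain rfl := eq_of_mem_barycentricStar hxS hxT (hScard.trans hTcard.symm)
    rfl
  · set T := Finset.univ.filter fun i => 0 < φ x i with hT
    have hTne : T.Nonempty :=
      (exists_pos_of_mem_stdSimplex (hφmem x)).imp fun i hi => by simp [hT, hi]
    have hTpos : 0 < T.card := hTne.card_pos
    have hTle : T.card ≤ n + 1 := hφcard x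
    rw [Nat.cast_one, one_le_encard_iff_nonempty]
    exact ⟨⟨T.card - 1, by omega⟩, hTne.choose,
      mem_U.2 ⟨T, hTne, ⟨(Nat.sub_add_cancel hTpos).symm, rfl⟩, mem_barycentricStar_support _⟩⟩

theorem exists_open_shrinking_of_finite {α : Type*} [Finite α] [NormalSpace X] {O : α → Set X}
    (hO : ∀ a, IsOpen (O a)) :
    ∃ V : α → Set X, (∀ a, IsOpen (V a)) ∧ (∀ a, closure (V a) ⊆ O a) ∧
      ∀ x, ∃ y, {a | y ∈ O a} ⊆ {a | x ∈ V a} := by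
  let patterns : Set (Set α) := range fun y => {a | y ∈ O a}
  obtain ⟨W, hW, hWo, hWO⟩ := exists_iUnion_eq_closure_subset
    (u := fun q : patterns => ⋂ a ∈ q.1, O a) (fun q => q.1.toFinite.isOpen_biInter fun a _ => hO a)
    (fun _ => toFinite _)
    (eq_univ_of_forall fun x => mem_iUnion.2 ⟨⟨_, x, rfl⟩, mem_iInter₂.2 fun _ ha => ha⟩)
  refine ⟨fun a => ⋃ q ∈ {q : patterns | a ∈ q.1}, W q, fun a => isOpen_biUnion fun q _ => hWo q,
    fun a => ?_, fun x => ?_⟩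
  · rw [(toFinite _).closure_biUnion]
    exact iUnion₂_subset fun q ha => (hWO q).trans (biInter_subset_of_mem ha)
  · obtain ⟨⟨_, y, rfl⟩, hx⟩ := mem_iUnion.1 (hW.symm ▸ mem_univ x)
    exact ⟨y, fun a ha => mem_biUnion ha hx⟩

theorem isOpen_mergedColor [Finite κ] [Finite ι] {V E : κ → ι → Set X}
    (hV : ∀ c i, IsOpen (V c i)) (hE : ∀ c i, IsClosed (E c i)) (i : ι) :
    IsOpen (mergedColor V E i) :=
  isOpen_iUnion fun S => isOpen_iUnion fun _ =>
    ((isOpen_setOf_subset_colorsAt hV S).inter (isOpen_setOf_colorsAt_subset hE S)).inter (hV _ i)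

theorem IsColoredRefinement.exists_succ [NormalSpace X] [Finite ι] {C : ι → Set X} {k p : ℕ}
    {U : Fin k → ι → Set X} (hU : IsColoredRefinement C U (p + 1)) :
    ∃ U' : Fin (k + 1) → ι → Set X, IsColoredRefinement C U' (p + 2) := by
  obtain ⟨V, hVo, hVU, hV⟩ := exists_open_shrinking_of_finite
    (O := fun a : Fin k × ι => U a.1 a.2) fun a => hU.isOpen a.1 a.2
  let V' : Fin k → ι → Set X := fun c i => V (c, i)
  let E : Fin k → ι → Set X := fun c i => closure (V (c, i))
  have hVE : ∀ c i, V' c i ⊆ E c i := fun _ _ => subset_closure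
  have hEU : ∀ c i, E c i ⊆ U c i := fun c i => hVU (c, i)
  have le_encard (x : X) : (p + 1 : ℕ) ≤ (colorsAt V' x).encard := by
    obtain ⟨y, hy⟩ := hV x
    exact (hU.le_encard_colorsAt y).trans
      (encard_le_encard fun c ⟨i, hi⟩ => ⟨i, hy (a := (c, i)) hi⟩)
  refine ⟨Fin.cons (mergedColor V' E) U, Fin.cases ?opens hU.isOpen, Fin.cases ?subs hU.subset,
    fun {c i j x} => Fin.cases ?unique (fun _ => hU.index_unique) c, fun x => ?depth⟩
  case opens => exact isOpen_mergedColor (fun c i => hVo (c, i)) fun _ _ => isClosed_closure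
  case subs =>
    intro i x hx
    obtain ⟨_, -, hxV⟩ := (mem_mergedColor hVE).1 hx
    exact hU.subset _ i (hEU _ i (hVE _ i hxV))
  case unique =>
    intro hi hj
    obtain ⟨_, -, hiV⟩ := (mem_mergedColor hVE).1 hi
    obtain ⟨_, -, hjV⟩ := (mem_mergedColor hVE).1 hj
    exact hU.index_unique (hEU _ _ (hVE _ _ hiV)) (hEU _ _ (hVE _ _ hjV))
  case depth =>
    have hx : (colorsAt V' x).Nonempty :=
      one_le_encard_iff_nonempty.1 (le_trans (by simp) (le_encard x))
    calc ((p + 2 : ℕ) : ℕ∞) = (p + 1 : ℕ) + 1 := by norm_cast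
      _ ≤ (colorsAt V' x).encard + 1 := by gcongr; exact le_encard x
      _ ≤ _ := encard_colorsAt_add_one_le_cons_mergedColor hVE hEU hx

theorem DimLE.exists_isColoredRefinement [NormalSpace X] [Finite ι] {n : ℕ} (hX : DimLE X n)
    {C : ι → Set X} (hCo : ∀ i, IsOpen (C i)) (hC : ⋃ i, C i = univ) (p : ℕ) :
    ∃ U : Fin (n + p + 1) → ι → Set X, IsColoredRefinement C U (p + 1) := by
  induction p with
  | zero => exact hX.exists_isColoredRefinement_one hCo hC
  | succ p ih =>
    obtain ⟨U, hU⟩ := ih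
    exact hU.exists_succ

end Coloring

/-! ### Dimension of products -/

section Product

variable {X Y : Type*} [TopologicalSpace X] [CompactSpace X] [R1Space X]
  [TopologicalSpace Y] [CompactSpace Y] [R1Space Y]

theorem exists_finite_prod_refinement {ι : Type*} {O : ι → Set (X × Y)}
    (hOo : ∀ i, IsOpen (O i)) (hO : ⋃ i, O i = univ) :
    ∃ (a b : ℕ) (C : Fin a → Set X) (D : Fin b → Set Y), (∀ j, IsOpen (C j)) ∧
      ⋃ j, C j = univ ∧ (∀ l, IsOpen (D l)) ∧ ⋃ l, D l = univ ∧
      ∀ j l, ∃ i, C j ×ˢ D l ⊆ O i := by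
  let := uniformSpaceOfCompactR1 (γ := X)
  let := uniformSpaceOfCompactR1 (γ := Y)
  obtain ⟨W, hW, hWO⟩ := lebesgue_number_lemma isCompact_univ hOo hO.ge
  obtain ⟨u, hu, v, hv, huv⟩ := entourageProd_subset hW
  obtain ⟨a, x, hx⟩ := exists_fin_subcover fun z : X =>
    interior_mem_nhds.2 (UniformSpace.ball_mem_nhds z hu)
  obtain ⟨b, y, hy⟩ := exists_fin_subcover fun z : Y =>
    interior_mem_nhds.2 (UniformSpace.ball_mem_nhds z hv)
  refine ⟨a, b, _, _, fun _ => isOpen_interior, hx, fun _ => isOpen_interior, hy, fun j l => ?_⟩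
  obtain ⟨i, hi⟩ := hWO (x j, y l) (mem_univ _)
  refine ⟨i, ?_⟩
  calc _ ⊆ UniformSpace.ball (x j) u ×ˢ UniformSpace.ball (y l) v :=
        Set.prod_mono interior_subset interior_subset
    _ = UniformSpace.ball (x j, y l) (entourageProd u v) := (ball_entourageProd u v (x j, y l)).symm
    _ ⊆ UniformSpace.ball (x j, y l) W := UniformSpace.ball_mono huv _
    _ ⊆ O i := hi

theorem DimLE.prod {n m : ℕ} (hX : DimLE X n) (hY : DimLE Y m) : DimLE (X × Y) (n + m) := by
  refine dimLE_of_forall_indexed fun O hOo hO => ?_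
  obtain ⟨a, b, C, D, hCo, hC, hDo, hD, hCD⟩ := exists_finite_prod_refinement hOo hO
  obtain ⟨U, hU⟩ := hX.exists_isColoredRefinement hCo hC m
  obtain ⟨V, hV⟩ : ∃ V : Fin (n + m + 1) → Fin b → Set Y, IsColoredRefinement D V (n + 1) :=
    add_comm m n ▸ hY.exists_isColoredRefinement hDo hD n
  refine ⟨Fin (n + m + 1) × Fin a × Fin b, fun q => U q.1 q.2.1 ×ˢ V q.1 q.2.2,
    fun q => (hU.isOpen _ _).prod (hV.isOpen _ _), eq_univ_of_forall ?_, fun q => ?_, ?_⟩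
  · rintro ⟨x, y⟩
    obtain ⟨c, ⟨i, hi⟩, j, hj⟩ : (colorsAt U x ∩ colorsAt V y).Nonempty := by
      have hx := hU.le_ncard_colorsAt x
      have hy := hV.le_ncard_colorsAt y
      exact nonempty_inter_of_lt_ncard_add_ncard (by rw [Nat.card_fin]; omega)
    exact mem_iUnion.2 ⟨(c, i, j), hi, hj⟩
  · obtain ⟨i, hi⟩ := hCD q.2.1 q.2.2
    exact ⟨i, (Set.prod_mono (hU.subset _ _) (hV.subset _ _)).trans hi⟩
  · rintro ⟨x, y⟩
    have hinj : InjOn Prod.fst {q : Fin (n + m + 1) × Fin a × Fin b |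
        (x, y) ∈ U q.1 q.2.1 ×ˢ V q.1 q.2.2} := by
      rintro ⟨c, i, j⟩ ⟨hi, hj⟩ ⟨_, i', j'⟩ ⟨hi', hj'⟩ rfl
      obtain rfl := hU.index_unique hi hi'
      obtain rfl := hV.index_unique hj hj'
      rfl
    calc _ ≤ (univ : Set (Fin (n + m + 1))).encard :=
          encard_le_encard_of_injOn (mapsTo_univ _ _) hinj
      _ = (n + m + 1 : ℕ) := by simp

theorem covDim_prod_le : covDim (X × Y) ≤ covDim X + covDim Y := by
  rcases covDim_eq_top_or_exists_dimLE X with hX | ⟨n, hn, hX⟩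
  · rw [hX, top_add]
    exact le_top
  rcases covDim_eq_top_or_exists_dimLE Y with hY | ⟨m, hm, hY⟩
  · rw [hY, add_top]
    exact le_top
  rw [hn, hm, ← Nat.cast_add]
  exact (hX.prod hY).covDim_le

end Product

/-! ### Projections of subsets of `K^G` -/

section Projection

variable {G K : Type*} [TopologicalSpace K]

theorem continuous_projTo (F : Set G) : Continuous (projTo F : (G → K) → F → K) :=
  continuous_pi fun g => continuous_apply g.1

variable [CompactSpace K] [T2Space K] {X : Set (G → K)}

theorem covDim_image_projTo_insert_le (hX : IsClosed X) (F : Set G) (g : G) :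
    covDim (projTo (insert g F) '' X) ≤ covDim (projTo F '' X) + covDim K := by
  have compactSpace_image (B : Set G) : CompactSpace (projTo B '' X) :=
    isCompact_iff_compactSpace.1 (hX.isCompact.image (continuous_projTo B))
  have := compactSpace_image F
  have := compactSpace_image (insert g F)
  let split : projTo (insert g F) '' X → projTo F '' X × K := fun y =>
    (⟨fun h => y.1 ⟨h, mem_insert_of_mem g h.2⟩,
      y.2.imp fun _ hx => ⟨hx.1, funext fun h => congrFun hx.2 ⟨h, _⟩⟩⟩,
      y.1 ⟨g, mem_insert g F⟩)
  have split_continuous : Continuous split :=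
    ((continuous_pi fun _ => (continuous_apply _).comp continuous_subtype_val).subtype_mk _).prodMk
      ((continuous_apply _).comp continuous_subtype_val)
  have split_injective : Function.Injective split := fun y z hyz => by
    obtain ⟨hF, hg⟩ := Prod.mk.inj hyz
    refine Subtype.ext (funext ?_)
    rintro ⟨h, rfl | hh⟩
    · exact hg
    · exact congrFun (congrArg Subtype.val hF) ⟨h, hh⟩
  exact (covDim_le_of_isClosedEmbedding (split_continuous.isClosedEmbedding split_injective)).trans
    covDim_prod_le

theorem covDim_image_projTo_union_le (hX : IsClosed X) (F : Set G) {D : Set G} (hD : D.Finite) :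
    covDim (projTo (F ∪ D) '' X) ≤ covDim (projTo F '' X) + D.ncard * covDim K := by
  induction D, hD using Set.Finite.induction_on with
  | empty => rw [union_empty, ncard_empty, Nat.cast_zero, zero_mul, add_zero]
  | @insert g D hg hD ih =>
    rw [union_insert, ncard_insert_of_notMem hg hD, Nat.cast_succ, add_one_mul, ← add_assoc]
    exact (covDim_image_projTo_insert_le hX _ g).trans (add_le_add_left ih _)

end Projection

/-! ### The metrics `ρ` and `ρ_F` -/

theorem continuous_shift {G K : Type*} [Group G] [TopologicalSpace K] (g : G) :
    Continuous (shift g : (G → K) → G → K) :=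
  continuous_pi fun h => continuous_apply (h * g)

theorem IsEpsEmb.imageFactorization {X Y : Type*} [TopologicalSpace X] [TopologicalSpace Y]
    {S : Set X} {ρ : S → S → ℝ} {ε : ℝ} {f : X → Y} (hf : IsEpsEmb ρ ε fun x : S => f x) :
    IsEpsEmb ρ ε (S.imageFactorization f) :=
  ⟨hf.1.subtype_mk _, fun x y hxy => hf.2 x y (congrArg Subtype.val hxy)⟩

section Rho

variable {G K : Type*} [Group G] [PseudoMetricSpace K] {α : G → ℝ} {ε : ℝ} {A F : Set G}

theorem continuous_rhoMetric [CompactSpace K] (hα : Summable α) :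
    Continuous fun q : (G → K) × (G → K) => rhoMetric α q.1 q.2 := by
  refine continuous_tsum (u := fun g => |α g| * Metric.diam (univ : Set K)) (fun g => by fun_prop)
    (hα.abs.mul_right _) fun g q => ?_
  rw [norm_mul, Real.norm_eq_abs, Real.norm_of_nonneg dist_nonneg]
  gcongr
  exact Metric.dist_le_diam_of_mem isCompact_univ.isBounded (mem_univ _) (mem_univ _)

theorem rhoMetricF_lt_iff (hF : F.Finite) (hFne : F.Nonempty) {x y : G → K} :
    rhoMetricF α F x y < ε ↔ ∀ g ∈ F, rhoMetric α (shift g x) (shift g y) < ε := by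
  rw [rhoMetricF, (hF.image _).csSup_lt_iff (hFne.image _), forall_mem_image]

theorem isOpen_setOf_rhoMetricF_lt [CompactSpace K] (hα : Summable α) (hF : F.Finite)
    (hFne : F.Nonempty) : IsOpen {q : (G → K) × (G → K) | rhoMetricF α F q.1 q.2 < ε} := by
  simp only [rhoMetricF_lt_iff hF hFne, ofPred_forall]
  exact hF.isOpen_biInter fun g _ => isOpen_lt ((continuous_rhoMetric hα).comp
    ((continuous_shift g).prodMap (continuous_shift g))) continuous_const

theorem isEpsEmb_projTo_image2_mul (X : Set (G → K))
    (hA : ∀ x y : G → K, (∀ g ∈ A, x g = y g) → rhoMetric α x y < ε)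
    (hF : F.Finite) (hFne : F.Nonempty) :
    IsEpsEmb (fun x y : X => rhoMetricF α F x.1 y.1) ε
      fun x : X => projTo (image2 (· * ·) A F) x.1 := by
  refine ⟨(continuous_projTo _).comp continuous_subtype_val, fun x y hxy => ?_⟩
  rw [rhoMetricF_lt_iff hF hFne]
  exact fun g hg => hA _ _ fun a ha => congrFun hxy ⟨a * g, mem_image2_of_mem ha hg⟩

end Rho

theorem widim_le_dim_proj_add_general {G K : Type*} [Group G] [MetricSpace K] [CompactSpace K]
    {X : Set (G → K)} (hX : IsClosed X) {α : G → ℝ} (hα : Summable α) {ε : ℝ}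
    {A : Set G} (hA : A.Finite) (heA : (1 : G) ∈ A)
    (hAsep : ∀ x y : G → K, (∀ g ∈ A, x g = y g) → rhoMetric α x y < ε)
    {F : Set G} (hF : F.Finite) (hFne : F.Nonempty) :
    IsEpsEmb (fun x y : X => rhoMetricF α F x.1 y.1) ε
        (fun x : X => projTo (image2 (· * ·) A F) x.1) ∧
      widim X (fun x y : X => rhoMetricF α F x.1 y.1) ε ≤
        covDim (projTo (image2 (· * ·) A F) '' X) ∧
      covDim (projTo (image2 (· * ·) A F) '' X) ≤
        covDim (projTo F '' X) + ((image2 (· * ·) A F \ F).ncard : ℕ∞) * covDim K ∧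
      widim X (fun x y : X => rhoMetricF α F x.1 y.1) ε ≤
        covDim (projTo F '' X) + ((image2 (· * ·) A F \ F).ncard : ℕ∞) * covDim K := by
  have : CompactSpace X := isCompact_iff_compactSpace.1 hX.isCompact
  have : CompactSpace (projTo (image2 (· * ·) A F) '' X) :=
    isCompact_iff_compactSpace.1 (hX.isCompact.image (continuous_projTo _))
  have emb := isEpsEmb_projTo_image2_mul X hAsep hF hFne
  have hopen : IsOpen {q : X × X | rhoMetricF α F q.1.1 q.2.1 < ε} :=
    (isOpen_setOf_rhoMetricF_lt hα hF hFne).preimage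
      (continuous_subtype_val.prodMap continuous_subtype_val)
  have widim_le := emb.imageFactorization.widim_le_covDim hopen
  have hFAF : F ⊆ image2 (· * ·) A F := fun g hg => ⟨1, heA, g, hg, one_mul g⟩
  have dim_le := covDim_image_projTo_union_le hX F ((hA.image2 (· * ·) hF).sdiff (t := F))
  rw [union_sdiff_cancel hFAF] at dim_le
  exact ⟨emb, widim_le, dim_le, widim_le.trans dim_le⟩

/-- **Lemma (from the proof of the upper-bound proposition).** Let `X` be a subshift of `K^G`
with `K` finite dimensional compact metric, `ε > 0`, and `A ∋ e` finite such that agreement on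
`A` forces `ρ < ε`. Then for every nonempty finite `F ⊆ G`: (i) `π_{AF}` restricted to `X` is
an `ε`-embedding w.r.t. `ρ_F`, hence `Widim_ε(X,ρ_F) ≤ dim π_{AF}(X)`; and (ii)
`dim π_{AF}(X) ≤ dim π_F(X) + |AF \ F| · dim K`, hence also
`Widim_ε(X,ρ_F) ≤ dim π_F(X) + |AF \ F| · dim K`. -/
theorem widim_le_dim_proj_add (G K : Type*) [Group G] [Countable G] [Infinite G]
    [MetricSpace K] [CompactSpace K] (hK : covDim K ≠ ⊤)
    (X : Set (G → K)) (hX : IsSubshift K X)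
    (α : G → ℝ) (hα : IsGoodWeight α) (ε : ℝ) (hε : 0 < ε)
    (A : Set G) (hA : A.Finite) (heA : (1 : G) ∈ A)
    (hAsep : ∀ x y : G → K, (∀ g ∈ A, x g = y g) → rhoMetric α x y < ε)
    (F : Set G) (hF : F.Finite) (hFne : F.Nonempty) :
    IsEpsEmb (fun x y : X => rhoMetricF α F x.1 y.1) ε
        (fun x : X => projTo (Set.image2 (· * ·) A F) x.1) ∧
      widim X (fun x y : X => rhoMetricF α F x.1 y.1) ε ≤
        covDim ↥(projTo (Set.image2 (· * ·) A F) '' X) ∧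
      covDim ↥(projTo (Set.image2 (· * ·) A F) '' X) ≤
        covDim ↥(projTo F '' X) +
          ((Set.image2 (· * ·) A F \ F).ncard : ℕ∞) * covDim K ∧
      widim X (fun x y : X => rhoMetricF α F x.1 y.1) ε ≤
        covDim ↥(projTo F '' X) +
          ((Set.image2 (· * ·) A F \ F).ncard : ℕ∞) * covDim K := by
  exact widim_le_dim_proj_add_general hX.1 hα.2.2 hA heA hAsep hF hFne
end

section
/- Let $G$ be an infinite countable discrete amenable group, $K$ a compact metric space containing a topological copy of $[0,1]$, and $(X,\sigma)$ a subshift of $(K^G,\sigma)$. Suppose $\{T_k\}_{k=1}^\infty$ is a Følner sequence of $G$, $J_k \subset T_k$ are finite subsets, and for every $k$ there is a continuous map $f_k : (K^{J_k}, d_{l^\infty}) \to (X, \rho_{T_k})$ satisfying $d_{l^\infty}(u,v) \le \rho_{T_k}(f_k(u), f_k(v))$ for all $u, v \in K^{J_k}$. Then $\mathrm{mdim}(X,\sigma) \ge \limsup_{k\to\infty} |J_k|/|T_k|$. -/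
open Set Filter Topology
open scoped ENNReal NNReal symmDiff

/-!
In the cube `[0,1]^J ⊆ K^J` opposite faces are at distance `1`, hence so are their images under a
distance-increasing map, and an `ε`-embedding into a polyhedron with `ε ≤ 1` keeps these images
disjoint. The distances to the images of the faces `x i = 0` then form a Lipschitz map on the
polyhedron which, by the Poincaré–Miranda theorem, covers an open box of `ℝ^J`; so the Hausdorff
dimension of the polyhedron is at least `|J|`.

Poincaré–Miranda reduces to the absence of `C¹` retractions of a compact convex body `s` onto its
frontier. If `u` vanishes on the frontier, then `x ↦ x + t • u x` permutes `s` for small `t`, so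
`∫ x in s, det (1 + t • u' x)` is the volume of `s`. This integral is polynomial in `t`, hence it
is the volume of `s` also at `t = 1`; but for a retraction `x + u x` the determinant vanishes.
-/

section Determinant

variable {E : Type*} [NormedAddCommGroup E] [NormedSpace ℝ E] [FiniteDimensional ℝ E]

theorem exists_polynomial_eval_eq_det_one_add_smul (A : E →L[ℝ] E) :
    ∃ p : Polynomial ℝ, p.natDegree ≤ Module.finrank ℝ E ∧ ∀ t, p.eval t = (1 + t • A).det := by
  let b := Module.finBasis ℝ E
  let M := LinearMap.toMatrix b b A
  refine ⟨Matrix.det ((Polynomial.X : Polynomial ℝ) • M.map Polynomial.C +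
    (1 : Matrix _ _ ℝ).map Polynomial.C), ?_, fun t ↦ ?_⟩
  · simpa using Polynomial.natDegree_det_X_add_C_le M 1
  calc _ = (t • M + 1).det := by
        rw [← Polynomial.coe_evalRingHom, RingHom.map_det]
        congr 1
        ext i j
        by_cases hij : i = j <;> simp [hij] <;> ring
    _ = (1 + t • A).det := by
        rw [ContinuousLinearMap.det, ← LinearMap.det_toMatrix b, add_comm]
        simp [M, LinearMap.toMatrix_one]

theorem det_one_add_pos {A : E →L[ℝ] E} (hA : ‖A‖ < 1) : 0 < (1 + A).det := by
  have hne (t : ℝ) (ht : t ∈ Icc (0 : ℝ) 1) : (1 + t • A).det ≠ 0 := by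
    have hunit : IsUnit (1 + t • A) := by
      rw [← sub_neg_eq_add]
      refine isUnit_one_sub_of_norm_lt_one ?_
      rw [norm_neg, norm_smul, Real.norm_of_nonneg ht.1]
      exact (mul_le_of_le_one_left (norm_nonneg A) ht.2).trans_lt hA
    exact (LinearMap.isUnit_det _ (hunit.map ContinuousLinearMap.toLinearMapRingHom)).ne_zero
  have hcont : Continuous fun t : ℝ ↦ (1 + t • A).det :=
    ContinuousLinearMap.continuous_det.comp (by fun_prop)
  have hzero : (1 + (0 : ℝ) • A).det = 1 := by simp [ContinuousLinearMap.det]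
  by_contra! hle
  obtain ⟨t, ht, h0⟩ := intermediate_value_Icc' zero_le_one hcont.continuousOn
    ⟨by simpa using hle, hzero.symm ▸ zero_le_one⟩
  exact hne t ht h0

theorem range_eq_top_of_det_ne_zero {A : E →L[ℝ] E} (hA : A.det ≠ 0) : A.range = ⊤ :=
  (LinearMap.isUnit_iff_range_eq_top _).1 ((LinearMap.isUnit_iff_isUnit_det _).2 hA.isUnit)

end Determinant

theorem inter_frontier_nonempty_of_isPreconnected {X : Type*} [TopologicalSpace X] {s t : Set X}
    (ht : IsPreconnected t) (hts : (t ∩ s).Nonempty) (htsc : (t ∩ sᶜ).Nonempty) :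
    (t ∩ frontier s).Nonempty := by
  by_contra! hempty
  have hcover : t ⊆ interior s ∪ interior sᶜ := by
    rw [← compl_frontier_eq_union_interior]
    exact (disjoint_iff_inter_eq_empty.2 hempty).subset_compl_right
  obtain ⟨x, hxt, hxs⟩ := hts
  obtain ⟨y, hyt, hys⟩ := htsc
  have hx : x ∈ interior s := (hcover hxt).resolve_right fun h ↦ interior_subset h hxs
  have hy : y ∈ interior sᶜ := (hcover hyt).resolve_left fun h ↦ hys (interior_subset h)
  obtain ⟨z, -, hz, hz'⟩ := ht _ _ isOpen_interior isOpen_interior hcover ⟨x, hxt, hx⟩ ⟨y, hyt, hy⟩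
  exact interior_subset hz' (interior_subset hz)

theorem lipschitzWith_indicator {E F : Type*} [SeminormedAddCommGroup E] [NormedSpace ℝ E]
    [SeminormedAddCommGroup F] {s : Set E} {u : E → F} {C : ℝ≥0} (hs : IsClosed s)
    (hu : LipschitzOnWith C u s) (h0 : ∀ x ∈ frontier s, u x = 0) :
    LipschitzWith C (s.indicator u) := by
  have norm_le {x y : E} (hx : x ∈ s) (hy : y ∉ s) : ‖u x‖ ≤ C * dist x y := by
    obtain ⟨z, hzxy, hzs⟩ := inter_frontier_nonempty_of_isPreconnected
      (convex_segment x y).isPreconnected ⟨x, left_mem_segment ℝ x y, hx⟩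
      ⟨y, right_mem_segment ℝ x y, hy⟩
    calc ‖u x‖ = dist (u x) (u z) := by rw [h0 z hzs, dist_zero_right]
      _ ≤ C * dist x z := hu.dist_le_mul x hx z (hs.frontier_subset hzs)
      _ ≤ C * dist x y := by
        gcongr
        linarith [dist_add_dist_of_mem_segment hzxy, dist_nonneg (x := z) (y := y)]
  refine LipschitzWith.of_dist_le_mul fun x y ↦ ?_
  by_cases hx : x ∈ s <;> by_cases hy : y ∈ s
  · simpa [hx, hy] using hu.dist_le_mul x hx y hy
  · simpa [hx, hy] using norm_le hx hy
  · simpa [hx, hy, dist_comm] using norm_le hy hx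
  · rw [indicator_of_notMem hx, indicator_of_notMem hy, dist_self]
    positivity

theorem bijective_add_of_lipschitzWith {E : Type*} [NormedAddCommGroup E] [NormedSpace ℝ E]
    [CompleteSpace E] {u : E → E} {c : ℝ≥0} (hu : LipschitzWith c u) (hc : c < 1) :
    Function.Bijective fun x ↦ x + u x := by
  have happrox : ApproximatesLinearOn (fun x ↦ x + u x)
      (ContinuousLinearEquiv.refl ℝ E : E →L[ℝ] E) univ c :=
    LipschitzOnWith.approximatesLinearOn (by convert hu.lipschitzOnWith (s := univ); ext; simp)
  have hc' : Subsingleton E ∨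
      c < ‖((ContinuousLinearEquiv.refl ℝ E).symm : E →L[ℝ] E)‖₊⁻¹ := by
    rcases subsingleton_or_nontrivial E with hE | hE
    · exact .inl hE
    · right
      simpa using hc
  exact ⟨injOn_univ.1 (happrox.injOn hc'), happrox.surjective hc'⟩

theorem image_add_eq_self {E : Type*} [AddZeroClass E] {s : Set E} {u : E → E}
    (hu : Function.Bijective fun x ↦ x + u x) (h0 : ∀ x ∉ s, u x = 0) :
    (fun x ↦ x + u x) '' s = s := by
  have hcompl : (fun x ↦ x + u x) '' sᶜ = sᶜ :=
    (image_congr fun x hx ↦ by simp [h0 x hx]).trans (image_id _)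
  exact compl_injective <| (image_compl_eq hu).symm.trans hcompl

section Retraction

open MeasureTheory

theorem exists_polynomial_eval_eq_integral {α : Type*} {m : MeasurableSpace α} {μ : Measure α}
    {p : α → Polynomial ℝ} {d : ℕ} (hdeg : ∀ x, (p x).natDegree ≤ d)
    (hint : ∀ t, Integrable (fun x ↦ (p x).eval t) μ) :
    ∃ P : Polynomial ℝ, ∀ t, P.eval t = ∫ x, (p x).eval t ∂μ := by
  let s := Finset.range (d + 1)
  let v : ℕ → ℝ := (↑)
  have hv : InjOn v s := Nat.cast_injective.injOn
  refine ⟨Lagrange.interpolate s v fun j ↦ ∫ x, (p x).eval (v j) ∂μ, fun t ↦ ?_⟩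
  have heval (x : α) :
      (p x).eval t = ∑ j ∈ s, (p x).eval (v j) * (Lagrange.basis s v j).eval t := by
    have hlt : (p x).degree < s.card :=
      (Polynomial.degree_le_of_natDegree_le (hdeg x)).trans_lt
        (by simp only [s, Finset.card_range]; exact_mod_cast Nat.lt_succ_self d)
    conv_lhs => rw [Lagrange.eq_interpolate hv hlt]
    simp [Lagrange.interpolate_apply, Polynomial.eval_finsetSum]
  simp only [heval, Lagrange.interpolate_apply, Polynomial.eval_finsetSum, Polynomial.eval_mul,
    Polynomial.eval_C]
  rw [integral_finsetSum s fun j _ ↦ (hint (v j)).mul_const _]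
  simp only [integral_mul_const]

variable {E : Type*} [NormedAddCommGroup E] [NormedSpace ℝ E] [FiniteDimensional ℝ E]

section Measure

variable [MeasurableSpace E] [BorelSpace E] (μ : Measure E) [μ.IsAddHaarMeasure]

theorem setIntegral_det_one_add {s : Set E} {u : E → E} {u' : E → E →L[ℝ] E} {c : ℝ≥0}
    (hs : IsClosed s) (hconv : Convex ℝ s) (hu : ∀ x ∈ s, HasFDerivWithinAt u (u' x) s x)
    (hu' : ∀ x ∈ s, ‖u' x‖₊ ≤ c) (hc : c < 1) (h0 : ∀ x ∈ frontier s, u x = 0) :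
    ∫ x in s, (1 + u' x).det ∂μ = μ.real s := by
  have hlip : LipschitzWith c (s.indicator u) :=
    lipschitzWith_indicator hs (hconv.lipschitzOnWith_of_nnnorm_hasFDerivWithin_le hu hu') h0
  have hbij := bijective_add_of_lipschitzWith hlip hc
  have himage : (fun x ↦ x + s.indicator u x) '' s = s :=
    image_add_eq_self hbij fun x hx ↦ indicator_of_notMem hx u
  have hderiv (x : E) (hx : x ∈ s) :
      HasFDerivWithinAt (fun x ↦ x + s.indicator u x) (1 + u' x) s x :=
    (hasFDerivWithinAt_id x s).add
      ((hu x hx).congr (fun y hy ↦ indicator_of_mem hy u) (indicator_of_mem hx u))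
  calc ∫ x in s, (1 + u' x).det ∂μ = ∫ x in s, |(1 + u' x).det| • (1 : ℝ) ∂μ :=
        setIntegral_congr_fun hs.measurableSet fun x hx ↦ by
          simp [abs_of_pos (det_one_add_pos (lt_of_le_of_lt (hu' x hx) hc))]
    _ = ∫ _ in (fun x ↦ x + s.indicator u x) '' s, (1 : ℝ) ∂μ :=
        (integral_image_eq_integral_abs_det_fderiv_smul μ hs.measurableSet hderiv
          hbij.injective.injOn fun _ ↦ (1 : ℝ)).symm
    _ = μ.real s := by simp [himage]

theorem setIntegral_det_one_add_fderiv {s : Set E} {u : E → E} (hs : IsCompact s)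
    (hconv : Convex ℝ s) (hu : ContDiff ℝ 1 u) (h0 : ∀ x ∈ frontier s, u x = 0) :
    ∫ x in s, (1 + fderiv ℝ u x).det ∂μ = μ.real s := by
  have hdu : Continuous (fderiv ℝ u) := hu.continuous_fderiv one_ne_zero
  choose p hpdeg hp using fun x ↦ exists_polynomial_eval_eq_det_one_add_smul (fderiv ℝ u x)
  have hint (t : ℝ) : IntegrableOn (fun x ↦ (p x).eval t) s μ := by
    simp only [hp]
    exact (ContinuousLinearMap.continuous_det.comp
      (continuous_const.add (hdu.const_smul t))).continuousOn.integrableOn_compact hs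
  obtain ⟨P, hP⟩ := exists_polynomial_eval_eq_integral hpdeg hint
  obtain ⟨C, hC⟩ : ∃ C : ℝ≥0, ∀ x ∈ s, ‖fderiv ℝ u x‖₊ ≤ C := by
    obtain ⟨C, hC⟩ := hs.exists_bound_of_continuousOn hdu.continuousOn
    exact ⟨C.toNNReal, fun x hx ↦ NNReal.le_toNNReal_of_coe_le (hC x hx)⟩
  have hsmall (t : ℝ≥0) (ht : t * C < 1) : P.eval (t : ℝ) = μ.real s := by
    simp only [hP, hp]
    refine setIntegral_det_one_add μ (u := fun x ↦ (t : ℝ) • u x) (c := t * C) hs.isClosed hconv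
      (fun x _ ↦ ((hu.differentiable one_ne_zero x).hasFDerivAt.const_smul _).hasFDerivWithinAt)
      (fun x hx ↦ ?_) ht fun x hx ↦ by simp [h0 x hx]
    simpa [nnnorm_smul] using mul_le_mul_right (hC x hx) t
  have hPconst : P = .C (μ.real s) := by
    refine Polynomial.eq_of_infinite_eval_eq _ _ ((Ioo_infinite (a := (0 : ℝ))
      (b := (C + 1 : ℝ)⁻¹) (by positivity)).mono fun t ht ↦ ?_)
    lift t to ℝ≥0 using ht.1.le
    have ht1 : t * (C + 1) < 1 := by
      have := (lt_inv_mul_iff₀ (by positivity)).1 (ht.2.trans_eq (mul_one _).symm)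
      rw [mul_comm]
      exact_mod_cast this
    exact (hsmall t ((mul_le_mul_right le_self_add t).trans_lt ht1)).trans
      Polynomial.eval_C.symm
  simpa [hp, hPconst] using (hP 1).symm

end Measure

theorem not_contDiff_retraction_frontier {s : Set E} (hs : IsCompact s) (hconv : Convex ℝ s)
    (hint : (interior s).Nonempty) {r : E → E} (hr : ContDiff ℝ 1 r)
    (hmaps : MapsTo r s (frontier s)) : ¬ EqOn r id (frontier s) := by
  intro hid
  borelize E
  have hdet (x : E) (hx : x ∈ interior s) : (fderiv ℝ r x).det = 0 := by
    by_contra hne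
    have hopen : map r (𝓝 x) = 𝓝 (r x) :=
      (hr.contDiffAt.hasStrictFDerivAt one_ne_zero).map_nhds_eq_of_surj
        (range_eq_top_of_det_ne_zero hne)
    have hmem : frontier s ∈ 𝓝 (r x) :=
      hopen ▸ mem_map.2 (mem_of_superset (mem_interior_iff_mem_nhds.1 hx) hmaps)
    exact (interior_frontier hs.isClosed).subset (mem_interior_iff_mem_nhds.2 hmem)
  let μ : Measure E := .addHaar
  have hvol := setIntegral_det_one_add_fderiv μ hs hconv (hr.sub contDiff_id)
    fun x hx ↦ sub_eq_zero.2 (hid hx)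
  have hzero : ∫ x in s, (1 + fderiv ℝ (fun y ↦ r y - id y) x).det ∂μ = 0 := by
    rw [setIntegral_congr_set (interior_ae_eq_of_null_frontier (hconv.addHaar_frontier μ)).symm]
    refine setIntegral_eq_zero_of_forall_eq_zero fun x hx ↦ ?_
    rw [fderiv_fun_sub (hr.differentiable one_ne_zero x) differentiableAt_id, fderiv_id,
      ← ContinuousLinearMap.one_def, add_sub_cancel, hdet x hx]
  have hpos : 0 < μ.real s :=
    ENNReal.toReal_pos (Measure.measure_pos_of_nonempty_interior μ hint).ne' hs.measure_lt_top.ne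
  exact hpos.ne (hzero.symm.trans hvol)

end Retraction

section Zeros

variable {E : Type*} [NormedAddCommGroup E] [InnerProductSpace ℝ E] [FiniteDimensional ℝ E]
  {G : E → E}

theorem exists_eq_zero_of_eq_self_of_le_norm (hG : Continuous G) {R : ℝ}
    (hid : ∀ x, R ≤ ‖x‖ → G x = x) : ∃ x, G x = 0 := by
  by_contra! hne
  let R' := max R 0 + 1
  have hRR' : R < R' := (le_max_left R 0).trans_lt (lt_add_one _)
  have hR' : 0 < R' := (le_max_right R 0).trans_lt (lt_add_one _)
  have hU : {x : E | R < ‖x‖} ∈ 𝓝ˢ {x : E | R' ≤ ‖x‖} :=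
    (isOpen_lt continuous_const continuous_norm).mem_nhdsSet.2 fun x hx ↦ hRR'.trans_le hx
  obtain ⟨H, hH, hdist, hHG, -⟩ := hG.exists_contDiff_approx_and_eqOn 1 hG.norm
    (fun x ↦ norm_pos_iff.2 (hne x)) (isClosed_le continuous_const continuous_norm) hU
    (contDiffOn_id.congr fun x hx ↦ hid x (le_of_lt hx))
  have hH0 (x : E) : ‖H x‖ ≠ 0 := fun h0 ↦ by
    simpa [norm_eq_zero.1 h0] using hdist x
  have hsphere : frontier (Metric.closedBall (0 : E) R') = Metric.sphere 0 R' :=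
    frontier_closedBall 0 hR'.ne'
  refine not_contDiff_retraction_frontier (isCompact_closedBall (0 : E) R')
    (convex_closedBall 0 R') ⟨0, by simpa [interior_closedBall _ hR'.ne'] using hR'⟩
    (r := fun x ↦ (R' / ‖H x‖) • H x) ?_ (fun x _ ↦ ?_) fun x hx ↦ ?_
  · exact (contDiff_const.div (hH.norm ℝ fun x ↦ norm_ne_zero_iff.1 (hH0 x)) hH0).smul hH
  · rw [hsphere, mem_sphere_zero_iff_norm, norm_smul, norm_div, norm_norm,
      div_mul_cancel₀ _ (hH0 x), Real.norm_of_nonneg hR'.le]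
  · rw [hsphere, mem_sphere_zero_iff_norm] at hx
    have hHx : H x = x := (hHG hx.ge).trans (hid x (hRR'.le.trans hx.ge))
    simp only [hHx, hx, div_self hR'.ne', one_smul, id]

theorem exists_eq_zero_of_norm_sub_self_le (hG : Continuous G) {M : ℝ}
    (hM : ∀ x, ‖G x - x‖ ≤ M) : ∃ x, G x = 0 := by
  let χ : E → ℝ := fun x ↦ projIcc (0 : ℝ) 1 zero_le_one (M + 1 - ‖x‖)
  have hχ : Continuous χ := by fun_prop
  obtain ⟨x, hx⟩ := exists_eq_zero_of_eq_self_of_le_norm (G := fun x ↦ x + χ x • (G x - x))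
    (R := M + 1) (by fun_prop) fun x hx ↦ by
      simp [χ, projIcc_of_le_left zero_le_one (sub_nonpos.2 hx)]
  have hxM : ‖x‖ ≤ M := calc
    ‖x‖ = χ x * ‖G x - x‖ := by
      rw [eq_neg_of_add_eq_zero_left hx, norm_neg, norm_smul, ← eq_neg_of_add_eq_zero_left hx,
        Real.norm_of_nonneg (projIcc _ _ _ _).2.1]
    _ ≤ ‖G x - x‖ := mul_le_of_le_one_left (norm_nonneg _) (projIcc _ _ _ _).2.2
    _ ≤ M := hM x
  have hχx : χ x = 1 := by
    simp [χ, projIcc_of_right_le zero_le_one (show 1 ≤ M + 1 - ‖x‖ by linarith)]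
  exact ⟨x, by simpa [hχx] using hx⟩

end Zeros

theorem poincare_miranda {ι : Type*} [Finite ι] {F : (ι → Icc (0 : ℝ) 1) → ι → ℝ}
    (hF : Continuous F) (h0 : ∀ x i, x i = 0 → F x i ≤ 0) (h1 : ∀ x i, x i = 1 → 0 ≤ F x i) :
    ∃ x, F x = 0 := by
  have := Fintype.ofFinite ι
  let q : EuclideanSpace ℝ ι → ι → Icc (0 : ℝ) 1 := fun x i ↦ projIcc 0 1 zero_le_one (x i)
  have hq : Continuous q := by fun_prop
  let V : (ι → Icc (0 : ℝ) 1) → EuclideanSpace ℝ ι := fun y ↦ WithLp.toLp 2 fun i ↦ F y i - y i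
  have hV : Continuous V := by fun_prop
  obtain ⟨M, hM⟩ := isCompact_univ.exists_bound_of_continuousOn hV.continuousOn
  obtain ⟨x, hx⟩ := exists_eq_zero_of_norm_sub_self_le (G := fun x ↦ x + V (q x)) (M := M)
    (by fun_prop) fun x ↦ by simpa using hM (q x) trivial
  refine ⟨q x, funext fun i ↦ ?_⟩
  have hxi : x i + (F (q x) i - q x i) = 0 := congrArg (· i) hx
  rcases le_total (x i) 0 with h | h
  · have hqi : q x i = 0 := projIcc_of_le_left _ h
    rw [hqi, Icc.coe_zero] at hxi
    refine le_antisymm (h0 _ i hqi) (show 0 ≤ F (q x) i from ?_)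
    linarith
  rcases le_total 1 (x i) with h' | h'
  · have hqi : q x i = 1 := projIcc_of_right_le _ h'
    rw [hqi, Icc.coe_one] at hxi
    refine le_antisymm (show F (q x) i ≤ 0 from ?_) (h1 _ i hqi)
    linarith
  · have hqi : (q x i : ℝ) = x i := by simp only [q, projIcc_of_mem _ ⟨h, h'⟩]
    rw [hqi] at hxi
    simpa using hxi

theorem exists_pi_Ioo_subset_image_infDist {ι Y : Type*} [Finite ι] [MetricSpace Y]
    {f : (ι → Icc (0 : ℝ) 1) → Y} (hf : Continuous f)
    (hsep : ∀ x y i, x i = 0 → y i = 1 → f x ≠ f y) :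
    ∃ δ : ι → ℝ, (∀ i, 0 < δ i) ∧ univ.pi (fun i ↦ Ioo 0 (δ i)) ⊆
      (fun p i ↦ Metric.infDist p (f '' {x | x i = 0})) '' range f := by
  have hcompact (i : ι) (t : Icc (0 : ℝ) 1) : IsCompact (f '' {x | x i = t}) :=
    (isClosed_eq (continuous_apply i) continuous_const).isCompact.image hf
  have hne (i : ι) (t : Icc (0 : ℝ) 1) : (f '' {x | x i = t}).Nonempty := ⟨_, fun _ ↦ t, rfl, rfl⟩
  have hpos (i : ι) : ∃ δ > 0, ∀ p ∈ f '' {x | x i = 1},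
      δ ≤ Metric.infDist p (f '' {x | x i = 0}) := by
    obtain ⟨p, ⟨y, hy, rfl⟩, hmin⟩ := (hcompact i 1).exists_isMinOn (hne i 1)
      (Metric.continuous_infDist_pt (f '' {x | x i = 0})).continuousOn
    refine ⟨_, ((hcompact i 0).isClosed.notMem_iff_infDist_pos (hne i 0)).1 ?_, hmin⟩
    rintro ⟨x, hx, hxy⟩
    exact hsep x y i hx hy hxy
  choose δ hδ hδle using hpos
  refine ⟨δ, hδ, fun c hc ↦ ?_⟩
  obtain ⟨x, hx⟩ := poincare_miranda
    (F := fun x i ↦ Metric.infDist (f x) (f '' {x | x i = 0}) - c i)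
    (continuous_pi fun i ↦ ((Metric.continuous_infDist_pt _).comp hf).sub continuous_const)
    (fun x i hxi ↦ by
      rw [Metric.infDist_zero_of_mem (mem_image_of_mem f hxi), zero_sub]
      exact neg_nonpos.2 (hc i trivial).1.le)
    (fun x i hxi ↦ sub_nonneg.2 <|
      (hc i trivial).2.le.trans (hδle i _ (mem_image_of_mem f hxi)))
  exact ⟨f x, mem_range_self x, funext fun i ↦ sub_eq_zero.1 (congrFun hx i)⟩

theorem natCard_le_dimH_range {ι Y : Type*} [Finite ι] [MetricSpace Y]
    {f : (ι → Icc (0 : ℝ) 1) → Y} (hf : Continuous f)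
    (hsep : ∀ x y i, x i = 0 → y i = 1 → f x ≠ f y) : Nat.card ι ≤ dimH (range f) := by
  have := Fintype.ofFinite ι
  obtain ⟨δ, hδ, hsub⟩ := exists_pi_Ioo_subset_image_infDist hf hsep
  have hlip : LipschitzWith 1 fun (p : Y) i ↦ Metric.infDist p (f '' {x | x i = 0}) :=
    LipschitzWith.of_dist_le_mul fun p q ↦ (dist_pi_le_iff (by positivity)).2 fun i ↦
      (Metric.lipschitz_infDist_pt _).dist_le_mul p q
  have hopen : IsOpen (univ.pi fun i ↦ Ioo 0 (δ i)) :=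
    isOpen_set_pi finite_univ fun _ _ ↦ isOpen_Ioo
  calc (Nat.card ι : ℝ≥0∞) = dimH (univ.pi fun i ↦ Ioo 0 (δ i)) := by
        rw [Real.dimH_of_nonempty_interior, Module.finrank_fintype_fun_eq_card,
          Nat.card_eq_fintype_card]
        rw [hopen.interior_eq, univ_pi_nonempty_iff]
        exact fun i ↦ nonempty_Ioo.2 (hδ i)
    _ ≤ _ := dimH_mono hsub
    _ ≤ dimH (range f) := hlip.dimH_image_le _

theorem dimH_convexHull_le {E : Type*} [NormedAddCommGroup E] [NormedSpace ℝ E]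
    [FiniteDimensional ℝ E] {s : Finset E} {m : ℕ} (hs : s.card ≤ m + 1) :
    dimH (convexHull ℝ (s : Set E)) ≤ m := by
  rcases s.eq_empty_or_nonempty with rfl | hne
  · simp
  rw [Real.Convex.dimH_eq_finrank_vectorSpan (convex_convexHull ℝ _) (by simpa using hne),
    ← direction_affineSpan, affineSpan_convexHull, direction_affineSpan]
  have : Nonempty s := hne.to_subtype
  have hspan := finrank_vectorSpan_range_add_one_le ℝ ((↑) : s → E)
  rw [Subtype.range_coe_subtype, Finset.setOfPred_mem, Fintype.card_coe] at hspan
  exact_mod_cast Nat.le_of_succ_le_succ (hspan.trans hs)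

theorem dimH_simplicialComplex_space_le {E : Type*} [NormedAddCommGroup E] [NormedSpace ℝ E]
    [FiniteDimensional ℝ E] {P : Geometry.SimplicialComplex ℝ E} {m : ℕ}
    (hP : P.faces.Countable) (hm : ∀ s ∈ P.faces, s.card ≤ m + 1) : dimH P.space ≤ m := by
  rw [Geometry.SimplicialComplex.space, dimH_bUnion hP]
  exact iSup₂_le fun s hs ↦ dimH_convexHull_le (hm s hs)

theorem natCard_le_widim {X ι : Type*} [TopologicalSpace X] [Finite ι] {ρ : X → X → ℝ} {ε : ℝ}
    {g : (ι → Icc (0 : ℝ) 1) → X} (hg : Continuous g)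
    (hsep : ∀ x y i, x i = 0 → y i = 1 → ε ≤ ρ (g x) (g y)) : Nat.card ι ≤ widim X ρ ε := by
  refine le_sInf ?_
  rintro _ ⟨m, rfl, N, P, hfin, hcard, φ, hφ, hφε⟩
  have hdim : (Nat.card ι : ℝ≥0∞) ≤ m := calc
    (Nat.card ι : ℝ≥0∞) ≤ dimH (range fun x ↦ (φ (g x) : Fin N → ℝ)) :=
      natCard_le_dimH_range (by fun_prop) fun x y i hx hy h ↦
        (hφε _ _ (Subtype.ext h)).not_ge (hsep x y i hx hy)
    _ ≤ dimH P.space := dimH_mono (range_subset_iff.2 fun x ↦ (φ (g x)).2)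
    _ ≤ m := dimH_simplicialComplex_space_le hfin.countable hcard
  exact_mod_cast hdim

theorem natCard_le_widim_of_path {K X ι : Type*} [PseudoMetricSpace K] [TopologicalSpace X]
    [Finite ι] {a b : K} (γ : Path a b) {ρ : X → X → ℝ} {f : (ι → K) → X} (hf : Continuous f)
    (hdist : ∀ u v i, dist (u i) (v i) ≤ ρ (f u) (f v)) :
    Nat.card ι ≤ widim X ρ (dist a b) :=
  natCard_le_widim (g := fun x ↦ f fun i ↦ γ (x i)) (by fun_prop) fun x y i hx hy ↦ by
    simpa [hx, hy] using hdist (fun i ↦ γ (x i)) (fun i ↦ γ (y i)) i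

/-- For `l = atTop`, `ρ k = ρ_{T_k}` and `t k = |T_k|` the right-hand side is
`mdimSubshift α X T`. -/
theorem mdim_ge_limsup_of_distance_increasing_maps_general {K X : Type*} [PseudoMetricSpace K]
    [TopologicalSpace X] {a b : K} (γ : Path a b) (hab : 0 < dist a b) {κ : Type*} {l : Filter κ}
    {J : κ → Type*} [∀ k, Finite (J k)] {ρ : κ → X → X → ℝ} {f : ∀ k, (J k → K) → X}
    (hf : ∀ k, Continuous (f k))
    (hdist : ∀ k u v j, dist (u j) (v j) ≤ ρ k (f k u) (f k v)) (t : κ → ℝ≥0∞) :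
    limsup (fun k ↦ (Nat.card (J k) : ℝ≥0∞) / t k) l ≤
      ⨆ ε : {ε : ℝ // 0 < ε},
        limsup (fun k ↦ ((widim X (ρ k) ε.1 : ℕ∞) : ℝ≥0∞) / t k) l := by
  refine le_iSup_of_le ⟨dist a b, hab⟩ (limsup_le_limsup (.of_forall fun k ↦ ?_))
  refine ENNReal.div_le_div_right ?_ (t k)
  exact_mod_cast ENat.toENNReal_le.2 (natCard_le_widim_of_path γ (hf k) (hdist k))

/-- **Lemma (lower bound for mean dimension).** Let `X ⊆ K^G` be a subshift where `K` contains
an isometric copy of `[0,1]`, `{T_k}` a Følner sequence, `J_k ⊆ T_k`, and suppose there are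
continuous maps `f_k : (K^{J_k}, d_{l^∞}) → (X, ρ_{T_k})` which do not decrease distances.
Then `mdim(X,σ) ≥ limsup_k |J_k| / |T_k|`. -/
theorem mdim_ge_limsup_of_distance_increasing_maps (G K : Type*) [Group G] [Countable G]
    [Infinite G] (hG : AmenableGroup G) [MetricSpace K] [CompactSpace K]
    (ι : Set.Icc (0 : ℝ) 1 → K) (hι : Isometry ι)
    (X : Set (G → K)) (hX : IsSubshift K X)
    (α : G → ℝ) (hα : IsGoodWeight α)
    (T : ℕ → Set G) (hT : IsFolnerSeq T)
    (J : ℕ → Set G) (hJ : ∀ k, J k ⊆ T k)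
    (f : ∀ k : ℕ, (↥(J k) → K) → (G → K))
    (hfX : ∀ k u, f k u ∈ X)
    (hfc : ∀ k, Continuous (f k))
    (hfd : ∀ (k : ℕ) (u v : ↥(J k) → K),
      sSup (Set.range fun g : ↥(J k) => dist (u g) (v g)) ≤
        rhoMetricF α (T k) (f k u) (f k v)) :
    Filter.limsup (fun k => ((J k).ncard : ℝ≥0∞) / ((T k).ncard : ℝ≥0∞)) atTop ≤
      mdimSubshift α X T := by
  have (k : ℕ) : Finite (J k) := (hT.1 k).1.subset (hJ k)
  let γ : Path (ι 0) (ι 1) := ⟨⟨ι, hι.continuous⟩, rfl, rfl⟩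
  have hγ : 0 < dist (ι 0) (ι 1) := by rw [hι.dist_eq]; simp [Subtype.dist_eq]
  exact mdim_ge_limsup_of_distance_increasing_maps_general γ hγ
    (f := fun k u ↦ (⟨f k u, hfX k u⟩ : X)) (fun k ↦ (hfc k).subtype_mk (hfX k))
    (fun k u v j ↦ (le_csSup (finite_range _).bddAbove (mem_range_self j)).trans (hfd k u v))
    fun k ↦ (T k).ncard
end

section
/- Let $P$ be the cone over the three-point discrete space (tripod) with the graph metric $d$ in which each edge has length one. For every $\epsilon \in (0,1)$, every positive integer $n$, and every finite set $F$ with $|F| \le 2n - 1$: there is no continuous map $f : P^n \to [0,1]^F$ such that $f(x) = f(y)$ implies $d_{l^\infty}(x,y) < \epsilon$. Equivalently, if $(P^n, d_{l^\infty})$ admits an $\epsilon$-embedding into $[0,1]^F$ for some $\epsilon \in (0,1)$, then $|F| \ge 2n$. -/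
open Set Filter Topology
open scoped ENNReal NNReal symmDiff

/-!
The plane maps to the tripod so that antipodal points of norm at least `1` land at distance at
least `1`: send `(u, v)` to the leg of the largest of `0, u, v`, at distance the lead of that
number over the other two. In the `n`-th power, `f` pulls back to `ℝ²ⁿ`, where the Borsuk–Ulam
theorem identifies two antipodal points of the unit sphere as soon as the target has dimension
less than `2n`; their images are at distance at least `1`.

The Borsuk–Ulam theorem follows from its Lyusternik–Schnirelmann form: if open sets
`±U_0, …, ±U_{d-1}` with `U_i` disjoint from `-U_i` covered a sphere of dimension at least `d`,
choose `s_i : E → ℤ/2` with `s_i = 1` on `U_i`, `s_i = 0` on `-U_i` and `s_i(-x) = s_i(x) + 1`.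
The cocycle `δs_{d-1} ∪ ⋯ ∪ δs_0` vanishes on each simplex lying in one set of the cover, hence
on a hemisphere `h_d` of dimension `d` subdivided until its simplices are that small. But it takes
the value `1` there: as `∂h_k = h_{k-1} + (-h_{k-1})` and `s_{k-1}(-x) = s_{k-1}(x) + 1`, the
product of `k` factors has on `h_k` the value of the product of `k - 1` factors on `h_{k-1}`.
-/

/-- Mod 2 chains on the full simplex with vertex set `X`, augmented: the list `[x₀, …, x_k]` is an
ordered, possibly degenerate, `k`-simplex, and `[]` is the simplex of dimension `-1`. -/
abbrev ListChain (X : Type*) : Type _ := List X →₀ ZMod 2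

namespace ListChain

section Basic

variable {X Y M : Type*} [AddCommGroup M] [Module (ZMod 2) M]

/-- A simplex, as a chain. -/
noncomputable abbrev of (l : List X) : ListChain X := Finsupp.single l 1

theorem hom_ext {f g : ListChain X →ₗ[ZMod 2] M} (h : ∀ l, f (of l) = g (of l)) : f = g :=
  Finsupp.lhom_ext' fun l => LinearMap.ext_ring (h l)

/-- Linear extension of a function defined on simplices. -/
noncomputable def lift (f : List X → M) : ListChain X →ₗ[ZMod 2] M :=
  Finsupp.linearCombination (ZMod 2) f

@[simp] theorem lift_of (f : List X → M) (l : List X) : lift f (of l) = f l := by simp [lift]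

/-- The pushforward of chains along a map of vertices. -/
noncomputable def map (φ : X → Y) : ListChain X →ₗ[ZMod 2] ListChain Y :=
  lift fun l => of (l.map φ)

@[simp] theorem map_of (φ : X → Y) (l : List X) : map φ (of l) = of (l.map φ) := lift_of _ _

/-- The cone with apex `x`. -/
noncomputable def cone (x : X) : Module.End (ZMod 2) (ListChain X) :=
  lift fun l => of (x :: l)

@[simp] theorem cone_of (x : X) (l : List X) : cone x (of l) = of (x :: l) := lift_of _ _

/-- The augmented simplicial boundary operator. -/
noncomputable def boundary : Module.End (ZMod 2) (ListChain X) :=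
  lift fun l => ∑ i : Fin l.length, of (l.eraseIdx i)

theorem boundary_of (l : List X) : boundary (of l) = ∑ i : Fin l.length, of (l.eraseIdx i) :=
  lift_of _ _

theorem map_cone (φ : X → Y) (x : X) (c : ListChain X) :
    map φ (cone x c) = cone (φ x) (map φ c) :=
  LinearMap.congr_fun (f := map φ ∘ₗ cone x) (g := cone (φ x) ∘ₗ map φ)
    (hom_ext fun l => by simp) c

theorem boundary_map (φ : X → Y) (c : ListChain X) : boundary (map φ c) = map φ (boundary c) :=
  LinearMap.congr_fun (f := boundary ∘ₗ map φ) (g := map φ ∘ₗ boundary)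
    (hom_ext fun l => by
      simp only [LinearMap.comp_apply, map_of, boundary_of, map_sum, ← List.eraseIdx_map]
      exact Fintype.sum_equiv (finCongr (List.length_map φ)) _ _ fun _ => rfl) c

theorem boundary_cone (x : X) (c : ListChain X) :
    boundary (cone x c) = c + cone x (boundary c) :=
  LinearMap.congr_fun (f := boundary ∘ₗ cone x)
    (g := LinearMap.id + cone x ∘ₗ boundary)
    (hom_ext fun l => by simp [boundary_of, Fin.sum_univ_succ]) c

theorem boundary_boundary (c : ListChain X) : boundary (boundary c) = 0 := by
  refine LinearMap.congr_fun (f := boundary ∘ₗ boundary) (g := 0) (hom_ext fun l => ?_) c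
  induction l with
  | nil => simp [boundary_of]
  | cons x l ih =>
    have ih : boundary (boundary (of l)) = 0 := ih
    simp [← cone_of, boundary_cone, ih, ZModModule.add_self, -Finsupp.single_add]

/-- The chains all of whose simplices belong to `S`. -/
abbrev chainsOn (S : Set (List X)) : Submodule (ZMod 2) (ListChain X) :=
  Finsupp.supported (ZMod 2) (ZMod 2) S

theorem of_mem_chainsOn {S : Set (List X)} {l : List X} (hl : l ∈ S) : of l ∈ chainsOn S :=
  Finsupp.single_mem_supported _ _ hl

theorem chainsOn_mono {S S' : Set (List X)} (h : ∀ l ∈ S, l ∈ S') {c : ListChain X}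
    (hc : c ∈ chainsOn S) : c ∈ chainsOn S' :=
  Finsupp.supported_mono h hc

theorem map_mem_of_mem_chainsOn {S : Set (List X)} {f : ListChain X →ₗ[ZMod 2] M}
    {p : Submodule (ZMod 2) M} (h : ∀ l ∈ S, f (of l) ∈ p) {c : ListChain X}
    (hc : c ∈ chainsOn S) : f c ∈ p := by
  rw [chainsOn, Finsupp.supported_eq_span_single] at hc
  exact (Submodule.span_le (p := p.comap f)).2 (forall_mem_image.2 h) hc

theorem eqOn_chainsOn {S : Set (List X)} {f g : ListChain X →ₗ[ZMod 2] M}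
    (h : ∀ l ∈ S, f (of l) = g (of l)) {c : ListChain X} (hc : c ∈ chainsOn S) : f c = g c := by
  rw [chainsOn, Finsupp.supported_eq_span_single] at hc
  exact LinearMap.eqOn_span' (forall_mem_image.2 h) hc

/-- The chains all of whose vertices belong to `V`. -/
abbrev chainsIn (V : Set X) : Submodule (ZMod 2) (ListChain X) := chainsOn {l | ∀ x ∈ l, x ∈ V}

theorem boundary_mem_chainsIn {V : Set X} {c : ListChain X} (hc : c ∈ chainsIn V) :
    boundary c ∈ chainsIn V := by
  refine map_mem_of_mem_chainsOn (fun l hl => ?_) hc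
  rw [boundary_of]
  exact Submodule.sum_mem _ fun i _ =>
    of_mem_chainsOn fun x hx => hl x (List.mem_of_mem_eraseIdx hx)

end Basic

section CoboundaryProd

variable {X : Type*}

/-- The cap product with the `0`-cochain `t`: it weights a simplex by the value of `t` at its first
vertex, and `[]` by `0`. -/
noncomputable def cap (t : X → ZMod 2) : Module.End (ZMod 2) (ListChain X) :=
  lift fun l => (l.head?.elim 0 t) • of l

theorem cap_of_nil (t : X → ZMod 2) : cap t (of []) = 0 := by simp [cap]

theorem cap_of_cons (t : X → ZMod 2) (x : X) (l : List X) :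
    cap t (of (x :: l)) = t x • of (x :: l) := by simp [cap]

theorem cap_mem_chainsIn (t : X → ZMod 2) {V : Set X} {c : ListChain X} (hc : c ∈ chainsIn V) :
    cap t c ∈ chainsIn V := by
  refine map_mem_of_mem_chainsOn (fun l hl => ?_) hc
  rw [cap, lift_of]
  exact Submodule.smul_mem _ _ (of_mem_chainsOn hl)

/-- The `k`-cocycle `W_k = δs_{k-1} ∪ ⋯ ∪ δs_0`, a product of coboundaries of `0`-cochains. It is
built from `W_0 = 1` by `W_{k+1} = δ(s_k ∪ W_k)`. -/
noncomputable def coboundaryProd (s : ℕ → X → ZMod 2) : ℕ → ListChain X →ₗ[ZMod 2] ZMod 2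
  | 0 => lift fun l => if l.length = 1 then 1 else 0
  | k + 1 => coboundaryProd s k ∘ₗ cap (s k) ∘ₗ boundary

variable (s : ℕ → X → ZMod 2)

theorem coboundaryProd_zero_of (l : List X) :
    coboundaryProd s 0 (of l) = if l.length = 1 then 1 else 0 := lift_of _ _

theorem coboundaryProd_succ (k : ℕ) (c : ListChain X) :
    coboundaryProd s (k + 1) c = coboundaryProd s k (cap (s k) (boundary c)) := rfl

theorem coboundaryProd_of_nil (k : ℕ) : coboundaryProd s k (of []) = 0 := by
  cases k with
  | zero => simp [coboundaryProd_zero_of]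
  | succ k => simp [coboundaryProd_succ, boundary_of]

theorem coboundaryProd_boundary (k : ℕ) (c : ListChain X) :
    coboundaryProd s k (boundary c) = 0 := by
  cases k with
  | zero =>
    refine LinearMap.congr_fun (f := coboundaryProd s 0 ∘ₗ boundary) (g := 0)
      (hom_ext fun l => ?_) c
    have h_face (i : Fin l.length) :
        coboundaryProd s 0 (of (l.eraseIdx i)) = if l.length = 2 then 1 else 0 := by
      have : l.length - 1 = 1 ↔ l.length = 2 := by omega
      simp only [coboundaryProd_zero_of, List.length_eraseIdx_of_lt i.2, this]
    simp only [LinearMap.comp_apply, boundary_of, map_sum, h_face]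
    split_ifs with h
    · simp [h, CharTwo.two_eq_zero]
    · simp
  | succ k => rw [coboundaryProd_succ, boundary_boundary, map_zero, map_zero]

variable {s}

theorem coboundaryProd_cap_of_eqOn_const {t : X → ZMod 2} {a : ZMod 2} (k : ℕ) {c : ListChain X}
    (hc : c ∈ chainsIn {x | t x = a}) :
    coboundaryProd s k (cap t c) = a * coboundaryProd s k c := by
  refine eqOn_chainsOn (f := coboundaryProd s k ∘ₗ cap t) (g := a • coboundaryProd s k) ?_ hc
  rintro (_ | ⟨x, l⟩) hl
  · simp [cap_of_nil, coboundaryProd_of_nil]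
  · simp [cap_of_cons, show t x = a from hl x List.mem_cons_self, -Finsupp.smul_single]

theorem coboundaryProd_eq_zero {i k : ℕ} (hik : i < k) {a : ZMod 2} {c : ListChain X}
    (hc : c ∈ chainsIn {x | s i x = a}) : coboundaryProd s k c = 0 := by
  induction k generalizing c with
  | zero => omega
  | succ k ih =>
    have hbc := boundary_mem_chainsIn hc
    rw [coboundaryProd_succ]
    rcases Nat.lt_succ_iff_lt_or_eq.1 hik with h | rfl
    · exact ih h (cap_mem_chainsIn _ hbc)
    · rw [coboundaryProd_cap_of_eqOn_const i hbc, coboundaryProd_boundary, mul_zero]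

variable {T : X → X} {V : Set X}

theorem coboundaryProd_cap_map {k : ℕ} {t : X → ZMod 2} (ht : ∀ x ∈ V, t (T x) = t x + 1)
    (hT : ∀ c ∈ chainsIn V, coboundaryProd s k (map T c) = coboundaryProd s k c)
    {c : ListChain X} (hc : c ∈ chainsIn V) :
    coboundaryProd s k (cap t (map T c)) =
      coboundaryProd s k (cap t c) + coboundaryProd s k c := by
  refine eqOn_chainsOn (f := coboundaryProd s k ∘ₗ cap t ∘ₗ map T)
    (g := coboundaryProd s k ∘ₗ cap t + coboundaryProd s k) ?_ hc
  rintro (_ | ⟨x, l⟩) hl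
  · simp [cap_of_nil, coboundaryProd_of_nil]
  · have h_map := hT _ (of_mem_chainsOn hl)
    simp only [map_of, List.map_cons] at h_map
    simp only [LinearMap.comp_apply, LinearMap.add_apply, map_of, List.map_cons, cap_of_cons,
      map_smul, h_map, ht x (hl x List.mem_cons_self), smul_eq_mul]
    ring

theorem coboundaryProd_map (hs : ∀ k, ∀ x ∈ V, s k (T x) = s k x + 1) (k : ℕ) {c : ListChain X}
    (hc : c ∈ chainsIn V) : coboundaryProd s k (map T c) = coboundaryProd s k c := by
  induction k generalizing c with
  | zero =>
    exact eqOn_chainsOn (f := coboundaryProd s 0 ∘ₗ map T) (g := coboundaryProd s 0)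
      (fun l _ => by simp [coboundaryProd_zero_of]) hc
  | succ k ih =>
    rw [coboundaryProd_succ, coboundaryProd_succ, boundary_map,
      coboundaryProd_cap_map (hs k) (fun _ => ih) (boundary_mem_chainsIn hc),
      coboundaryProd_boundary, add_zero]

/-- Chains `h_k` with `∂h_{k+1} = h_k + T h_k` are the hemispheres of an antipodal sphere. -/
theorem coboundaryProd_eq_one (hs : ∀ k, ∀ x ∈ V, s k (T x) = s k x + 1) {h : ℕ → ListChain X}
    {n : ℕ} (hV : ∀ k < n, h k ∈ chainsIn V)
    (h_boundary : ∀ k, boundary (h (k + 1)) = h k + map T (h k))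
    (h_zero : coboundaryProd s 0 (h 0) = 1) : coboundaryProd s n (h n) = 1 := by
  induction n with
  | zero => exact h_zero
  | succ n ih =>
    have hVn := hV n n.lt_succ_self
    rw [coboundaryProd_succ, h_boundary, map_add, map_add,
      coboundaryProd_cap_map (hs n) (fun _ => coboundaryProd_map hs n) hVn, ← add_assoc,
      CharTwo.add_self_eq_zero, zero_add, ih fun k hk => hV k (hk.trans n.lt_succ_self)]

end CoboundaryProd

section Subdivision

variable {X M E F : Type*} [AddCommGroup M] [Module (ZMod 2) M]

theorem hom_ext_of_boundary {f g : ListChain X →ₗ[ZMod 2] M} (h_nil : f (of []) = g (of []))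
    (h_step : ∀ l ≠ [], f (boundary (of l)) = g (boundary (of l)) → f (of l) = g (of l)) :
    f = g := by
  refine hom_ext fun l => ?_
  induction hl : l.length generalizing l with
  | zero => rwa [List.length_eq_zero_iff.1 hl]
  | succ k ih =>
    refine h_step l (by rintro rfl; simp at hl) ?_
    simp only [boundary_of, map_sum]
    exact Finset.sum_congr rfl fun i _ => ih _ (by rw [List.length_eraseIdx_of_lt i.2]; omega)

variable [AddCommGroup E] [Module ℝ E] [AddCommGroup F] [Module ℝ F]

/-- The convex hull of the vertices of a simplex. -/
def hull (l : List E) : Set E := convexHull ℝ {x | x ∈ l}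

theorem subset_hull {l : List E} {x : E} (hx : x ∈ l) : x ∈ hull l := subset_convexHull ℝ _ hx

theorem hull_subset_hull {l m : List E} (h : ∀ x ∈ m, x ∈ hull l) : hull m ⊆ hull l :=
  convexHull_min h (convex_convexHull ℝ _)

/-- The barycenter of the simplex with vertex list `l`, with value `0` at `[]`. -/
noncomputable def barycenter (l : List E) : E := (l.length : ℝ)⁻¹ • l.sum

theorem map_barycenter (f : E →ₗ[ℝ] F) (l : List E) :
    f (barycenter l) = barycenter (l.map f) := by
  simp [barycenter, map_list_sum]

theorem barycenter_mem_hull {l : List E} (hl : l ≠ []) : barycenter l ∈ hull l := by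
  have h_pos : 0 < l.length := List.length_pos_iff.2 hl
  rw [barycenter, ← Fin.sum_univ_getElem, Finset.smul_sum]
  refine (convex_convexHull ℝ _).sum_mem (fun _ _ => by positivity) ?_ fun i _ =>
    subset_hull (List.getElem_mem _)
  simp [h_pos.ne']

/-- The barycentric subdivision of a single simplex. -/
noncomputable def subdivideList : List E → ListChain E
  | [] => of []
  | x :: l => ∑ i : Fin (l.length + 1),
      cone (barycenter (x :: l)) (subdivideList ((x :: l).eraseIdx i))
termination_by l => l.length
decreasing_by
  have h_len : ((x :: l).eraseIdx i).length = l.length := List.length_eraseIdx_of_lt i.2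
  simp [h_len]

/-- The barycentric subdivision operator on chains in a real vector space. -/
noncomputable def subdivide : Module.End (ZMod 2) (ListChain E) := lift subdivideList

theorem subdivide_of_nil : subdivide (of ([] : List E)) = of [] := by
  rw [subdivide, lift_of, subdivideList]

theorem subdivide_of {l : List E} (hl : l ≠ []) :
    subdivide (of l) = cone (barycenter l) (subdivide (boundary (of l))) := by
  obtain ⟨x, l, rfl⟩ := List.exists_cons_of_ne_nil hl
  simp only [subdivide, boundary_of, map_sum, lift_of]
  rw [subdivideList, List.length_cons]

theorem commute_boundary_subdivide :
    Commute boundary (subdivide : Module.End (ZMod 2) (ListChain E)) := by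
  refine hom_ext_of_boundary (by simp [boundary_of, subdivide_of_nil]) fun l hl ih => ?_
  simp only [Module.End.mul_apply, boundary_boundary, map_zero] at ih ⊢
  rw [subdivide_of hl, boundary_cone, ih, map_zero, add_zero]

theorem map_subdivide (f : E →ₗ[ℝ] F) (c : ListChain E) :
    map f (subdivide c) = subdivide (map f c) := by
  refine LinearMap.congr_fun (f := map f ∘ₗ subdivide (E := E)) (g := subdivide (E := F) ∘ₗ map f)
    (hom_ext_of_boundary (by simp [subdivide_of_nil]) fun l hl ih => ?_) c
  simp only [LinearMap.comp_apply] at ih ⊢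
  rw [subdivide_of hl, map_cone, ih, map_of, subdivide_of (by simpa using hl), ← map_of,
    boundary_map, map_barycenter]

theorem commute_map_neg_subdivide :
    Commute (map Neg.neg) (subdivide : Module.End (ZMod 2) (ListChain E)) :=
  LinearMap.ext fun c => map_subdivide (-LinearMap.id : E →ₗ[ℝ] E) c

theorem subdivide_pow_of_singleton (x : E) (m : ℕ) : (subdivide ^ m) (of [x]) = of [x] := by
  induction m with
  | zero => rfl
  | succ m ih =>
    rw [pow_succ subdivide, Module.End.mul_apply, subdivide_of (List.cons_ne_nil x [])]
    simpa [boundary_of, subdivide_of_nil, barycenter] using ih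

end Subdivision

section Mesh

variable {E : Type*} [SeminormedAddCommGroup E] [NormedSpace ℝ E]

theorem isCompact_hull (l : List E) : IsCompact (hull l) :=
  (List.finite_toSet l).isCompact_convexHull ℝ

theorem dist_getElem_barycenter_le (l : List E) (j : Fin l.length) :
    dist l[j] (barycenter l) ≤ (l.length : ℝ)⁻¹ * ((l.length - 1) * Metric.diam (hull l)) := by
  have h_pos : 0 < l.length := j.pos
  have h_diff : l[j] - barycenter l = (l.length : ℝ)⁻¹ • ∑ i : Fin l.length, (l[j] - l[i]) := by
    rw [Finset.sum_sub_distrib, smul_sub, barycenter, ← Fin.sum_univ_getElem]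
    simp [← Nat.cast_smul_eq_nsmul ℝ, smul_smul, h_pos.ne']
  have h_dist (i : Fin l.length) : ‖l[j] - l[i]‖ ≤ Metric.diam (hull l) := by
    rw [← dist_eq_norm]
    exact Metric.dist_le_diam_of_mem (isCompact_hull l).isBounded
      (subset_hull (List.getElem_mem _)) (subset_hull (List.getElem_mem _))
  rw [dist_eq_norm, h_diff, norm_smul, norm_inv, Real.norm_natCast,
    ← Finset.sum_erase Finset.univ (a := j) (sub_self _)]
  gcongr
  calc ‖∑ i ∈ Finset.univ.erase j, (l[j] - l[i])‖
      ≤ ∑ _i ∈ Finset.univ.erase j, Metric.diam (hull l) :=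
        norm_sum_le_of_le _ fun i _ => h_dist i
    _ = (l.length - 1) * Metric.diam (hull l) := by
        rw [Finset.sum_const, Finset.card_erase_of_mem (Finset.mem_univ j), Finset.card_fin,
          nsmul_eq_mul, Nat.cast_pred h_pos]

theorem dist_barycenter_le {n : ℕ} {l : List E} (hn : l.length ≤ n + 1) {y : E} (hy : y ∈ hull l) :
    dist y (barycenter l) ≤ n / (n + 1) * Metric.diam (hull l) := by
  obtain ⟨x, hx, hxy⟩ := convexHull_exists_dist_ge hy (barycenter l)
  obtain ⟨j, hj, rfl⟩ := List.getElem_of_mem hx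
  have h_pos : (0 : ℝ) < l.length := by exact_mod_cast j.zero_le.trans_lt hj
  have hn' : (l.length : ℝ) ≤ n + 1 := by exact_mod_cast hn
  calc dist y (barycenter l)
      ≤ (l.length : ℝ)⁻¹ * ((l.length - 1) * Metric.diam (hull l)) :=
        hxy.trans (dist_getElem_barycenter_le l ⟨j, hj⟩)
    _ = (l.length - 1) / l.length * Metric.diam (hull l) := by ring
    _ ≤ n / (n + 1) * Metric.diam (hull l) := by
        gcongr ?_ * _
        rw [div_le_div_iff₀ h_pos (by positivity)]
        linarith

theorem diam_hull_cons_le {b : E} {m : List E} {D : ℝ} (hm : Metric.diam (hull m) ≤ D)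
    (hb : ∀ x ∈ m, dist x b ≤ D) : Metric.diam (hull (b :: m)) ≤ D := by
  have hD : 0 ≤ D := Metric.diam_nonneg.trans hm
  have h_dist {x y : E} (hx : x ∈ m) (hy : y ∈ m) : dist x y ≤ D :=
    (Metric.dist_le_diam_of_mem (isCompact_hull m).isBounded (subset_hull hx)
      (subset_hull hy)).trans hm
  rw [hull, convexHull_diam]
  refine Metric.diam_le_of_forall_dist_le hD fun x hx y hy => ?_
  rcases List.mem_cons.1 hx with rfl | hxm <;> rcases List.mem_cons.1 hy with rfl | hym
  · rwa [dist_self]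
  · rw [dist_comm]
    exact hb y hym
  · exact hb x hxm
  · exact h_dist hxm hym

theorem subdivide_of_mem_chainsOn (n : ℕ) (l : List E) (hn : l.length ≤ n + 1) :
    subdivide (of l) ∈ chainsOn {m | m.length = l.length ∧ hull m ⊆ hull l ∧
      Metric.diam (hull m) ≤ n / (n + 1) * Metric.diam (hull l)} := by
  induction hl : l.length generalizing l with
  | zero =>
    obtain rfl := List.length_eq_zero_iff.1 hl
    rw [subdivide_of_nil]
    exact of_mem_chainsOn ⟨rfl, subset_rfl, by simp [hull]⟩
  | succ k ih =>
    have hl0 : l ≠ [] := by rintro rfl; simp at hl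
    rw [subdivide_of hl0, boundary_of, map_sum, map_sum]
    refine Submodule.sum_mem _ fun i _ => ?_
    have h_len : (l.eraseIdx i).length = k := by rw [List.length_eraseIdx_of_lt i.2, hl]; rfl
    have h_face : hull (l.eraseIdx i) ⊆ hull l :=
      hull_subset_hull fun x hx => subset_hull (List.mem_of_mem_eraseIdx hx)
    refine map_mem_of_mem_chainsOn (fun m hm => ?_) (ih _ (by omega) h_len)
    obtain ⟨hm_len, hm_hull, hm_diam⟩ := hm
    have hm_l : hull m ⊆ hull l := hm_hull.trans h_face
    rw [cone_of]
    refine of_mem_chainsOn ⟨by simp [hm_len], hull_subset_hull fun x hx => ?_, diam_hull_cons_le ?_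
      fun x hx => dist_barycenter_le hn (hm_l (subset_hull hx))⟩
    · rcases List.mem_cons.1 hx with rfl | hx
      · exact barycenter_mem_hull hl0
      · exact hm_l (subset_hull hx)
    · exact hm_diam.trans (by
        gcongr
        exact Metric.diam_mono h_face (isCompact_hull l).isBounded)

/-- The simplices of dimension at most `n` that lie in `K` and have diameter at most `D`. -/
def simplicesIn (K : Set E) (n : ℕ) (D : ℝ) : Set (List E) :=
  {l | l.length ≤ n + 1 ∧ hull l ⊆ K ∧ Metric.diam (hull l) ≤ D}

theorem subdivide_pow_mem_chainsOn {K : Set E} {n : ℕ} {D : ℝ} {c : ListChain E}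
    (hc : c ∈ chainsOn (simplicesIn K n D)) (m : ℕ) :
    (subdivide ^ m) c ∈ chainsOn (simplicesIn K n ((n / (n + 1)) ^ m * D)) := by
  induction m with
  | zero => simpa using hc
  | succ m ih =>
    rw [pow_succ' subdivide, Module.End.mul_apply]
    refine map_mem_of_mem_chainsOn (fun l hl => ?_) ih
    obtain ⟨hl_len, hl_hull, hl_diam⟩ := hl
    refine chainsOn_mono ?_ (subdivide_of_mem_chainsOn n l hl_len)
    rintro p ⟨hp_len, hp_hull, hp_diam⟩
    refine ⟨hp_len.trans_le hl_len, hp_hull.trans hl_hull, hp_diam.trans ?_⟩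
    rw [pow_succ', mul_assoc]
    gcongr

theorem exists_mem_chainsOn_simplicesIn {V : Set E} {c : ListChain E}
    (hc : c ∈ chainsOn {l | hull l ⊆ V}) :
    ∃ K ⊆ V, IsCompact K ∧ ∃ n, c ∈ chainsOn (simplicesIn K n (Metric.diam K)) := by
  set K : Set E := ⋃ l ∈ (c.support : Set (List E)), hull l
  have hK : IsCompact K := c.support.finite_toSet.isCompact_biUnion fun l _ => isCompact_hull l
  refine ⟨K, iUnion₂_subset ((Finsupp.mem_supported _ c).1 hc), hK, c.support.sup List.length,
    (Finsupp.mem_supported _ c).2 fun l hl => ?_⟩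
  have hlK : hull l ⊆ K := subset_biUnion_of_mem (u := hull) hl
  exact ⟨(Finset.le_sup (f := List.length) (Finset.mem_coe.1 hl)).trans (Nat.le_succ _), hlK,
    Metric.diam_mono hlK hK.isBounded⟩

theorem subdivide_pow_mem_chainsIn {V : Set E} {c : ListChain E}
    (hc : c ∈ chainsOn {l | hull l ⊆ V}) (m : ℕ) : (subdivide ^ m) c ∈ chainsIn V := by
  obtain ⟨K, hKV, -, n, hcK⟩ := exists_mem_chainsOn_simplicesIn hc
  refine chainsOn_mono ?_ (subdivide_pow_mem_chainsOn hcK m)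
  exact fun l ⟨_, hlK, _⟩ x hx => hKV (hlK (subset_hull hx))

theorem exists_subdivide_pow_subordinate {ι : Type*} {U : ι → Set E} (hU : ∀ i, IsOpen (U i))
    {c : ListChain E} (hc : c ∈ chainsOn {l | hull l ⊆ ⋃ i, U i}) :
    ∃ m : ℕ, (subdivide ^ m) c ∈ chainsOn {l | l = [] ∨ ∃ i, ∀ x ∈ l, x ∈ U i} := by
  obtain ⟨K, hKU, hK, n, hcK⟩ := exists_mem_chainsOn_simplicesIn hc
  obtain ⟨δ, hδ, h_ball⟩ := lebesgue_number_lemma_of_metric hK hU hKU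
  have h_mesh : Tendsto (fun m : ℕ => ((n : ℝ) / (n + 1)) ^ m * Metric.diam K) atTop (𝓝 0) := by
    rw [← zero_mul (Metric.diam K)]
    refine (tendsto_pow_atTop_nhds_zero_of_lt_one (by positivity) ?_).mul_const _
    rw [div_lt_one (by positivity)]
    exact lt_add_one _
  obtain ⟨m, hm⟩ := (h_mesh.eventually_lt_const hδ).exists
  refine ⟨m, chainsOn_mono ?_ (subdivide_pow_mem_chainsOn hcK m)⟩
  rintro (_ | ⟨x, l⟩) ⟨-, hl_hull, hl_diam⟩
  · exact .inl rfl
  have hx : x ∈ hull (x :: l) := subset_hull List.mem_cons_self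
  obtain ⟨i, hi⟩ := h_ball x (hl_hull hx)
  refine .inr ⟨i, fun y hy => hi (Metric.mem_ball.2 ?_)⟩
  calc dist y x ≤ Metric.diam (hull (x :: l)) :=
        Metric.dist_le_diam_of_mem (isCompact_hull _).isBounded (subset_hull hy) hx
    _ < δ := hl_diam.trans_lt hm

end Mesh

section Hemisphere

section InvolutiveNeg

variable {E : Type*} [InvolutiveNeg E]

theorem map_neg_map_neg (c : ListChain E) : map Neg.neg (map Neg.neg c) = c :=
  LinearMap.congr_fun (f := map (X := E) Neg.neg ∘ₗ map (X := E) Neg.neg)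
    (g := LinearMap.id (M := ListChain E)) (hom_ext fun l => by simp) c

/-- The upper half of the `k`-sphere that bounds the cross-polytope with vertices
`±v 0, …, ±v k`. -/
noncomputable def hemisphere (v : ℕ → E) : ℕ → ListChain E
  | 0 => cone (v 0) (of [])
  | k + 1 => cone (v (k + 1)) (hemisphere v k + map Neg.neg (hemisphere v k))

theorem boundary_hemisphere_succ (v : ℕ → E) (k : ℕ) :
    boundary (hemisphere v (k + 1)) = hemisphere v k + map Neg.neg (hemisphere v k) := by
  suffices h_cycle : boundary (hemisphere v k + map Neg.neg (hemisphere v k)) = 0 by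
    rw [hemisphere, boundary_cone, h_cycle, map_zero, add_zero]
  induction k with
  | zero => simp [hemisphere, boundary_of, ZModModule.add_self, -Finsupp.single_add]
  | succ k ih =>
    rw [map_add, boundary_map, hemisphere, boundary_cone, ih, map_zero, add_zero, map_add,
      map_neg_map_neg, add_comm (map _ _), ZModModule.add_self]

end InvolutiveNeg

open scoped Pointwise

variable {E : Type*} [AddCommGroup E] [Module ℝ E]

theorem hull_map_neg (l : List E) : hull (l.map Neg.neg) = -hull l := by
  rw [hull, hull, ← convexHull_neg]
  congr 1
  ext x
  simp [neg_eq_iff_eq_neg]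

theorem hull_cons_subset {p q : Submodule ℝ E} (hpq : p ≤ q) {x : E} (hxq : x ∈ q) (hxp : x ∉ p)
    {l : List E} (hl : hull l ⊆ p \ {0}) : hull (x :: l) ⊆ q \ {0} := by
  have h_hull_q : hull (x :: l) ⊆ q := convexHull_min (fun y hy => by
    rcases List.mem_cons.1 hy with rfl | hy
    exacts [hxq, hpq (hl (subset_hull hy)).1]) q.convex
  refine fun y hy => ⟨h_hull_q hy, ?_⟩
  rintro rfl
  obtain rfl | hl0 := eq_or_ne l []
  · obtain rfl : 0 = x := by simpa [hull] using hy
    exact hxp p.zero_mem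
  have h_insert : {y | y ∈ x :: l} = insert x {y | y ∈ l} := by ext; simp
  have h_nonempty : {y | y ∈ l}.Nonempty := List.exists_mem_of_ne_nil l hl0
  rw [hull, h_insert, convexHull_insert h_nonempty] at hy
  obtain ⟨z, hz, a, b, -, -, hab, h_zero⟩ : ∃ z ∈ hull l, 0 ∈ segment ℝ x z := by
    simpa [hull, mem_convexJoin] using hy
  obtain ⟨hzp, hz0⟩ := hl hz
  rcases eq_or_ne a 0 with rfl | ha
  · obtain rfl : b = 1 := by simpa using hab
    exact hz0 (by simpa using h_zero)
  · refine hxp ((p.smul_mem_iff ha).1 ?_)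
    rw [eq_neg_of_add_eq_zero_left h_zero]
    exact p.neg_mem (p.smul_mem b hzp)

theorem hemisphere_mem_chainsOn {v : ℕ → E} {n : ℕ}
    (hv : ∀ k ≤ n, v k ∉ Submodule.span ℝ (v '' Iio k)) {k : ℕ} (hk : k ≤ n) :
    hemisphere v k ∈ chainsOn {l | hull l ⊆ Submodule.span ℝ (v '' Iio (k + 1)) \ {0}} := by
  have h_cone {k : ℕ} (hk : k ≤ n) {l : List E}
      (hl : hull l ⊆ Submodule.span ℝ (v '' Iio k) \ {0}) :
      hull (v k :: l) ⊆ Submodule.span ℝ (v '' Iio (k + 1)) \ {0} :=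
    hull_cons_subset (Submodule.span_mono (image_mono (Iio_subset_Iio k.le_succ)))
      (Submodule.subset_span (mem_image_of_mem v k.lt_succ_self)) (hv k hk) hl
  induction k with
  | zero =>
    rw [hemisphere, cone_of]
    exact of_mem_chainsOn (h_cone hk (by simp [hull]))
  | succ k ih =>
    have ih := ih (k.le_succ.trans hk)
    have ih_neg : map Neg.neg (hemisphere v k) ∈
        chainsOn {l | hull l ⊆ Submodule.span ℝ (v '' Iio (k + 1)) \ {0}} := by
      refine map_mem_of_mem_chainsOn (fun l hl => ?_) ih
      rw [map_of]
      refine of_mem_chainsOn fun y hy => ?_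
      rw [hull_map_neg] at hy
      simpa using hl hy
    rw [hemisphere]
    refine map_mem_of_mem_chainsOn (fun l hl => ?_) (add_mem ih ih_neg)
    rw [cone_of]
    exact of_mem_chainsOn (h_cone hk hl)

end Hemisphere

end ListChain

section BorsukUlam

open scoped Pointwise

theorem exists_antipodal_label {X : Type*} [InvolutiveNeg X] {U : Set X} (hU : Disjoint U (-U)) :
    ∃ t : X → ZMod 2, (∀ x, x ≠ -x → t (-x) = t x + 1) ∧ (∀ x ∈ U, t x = 1) ∧
      ∀ x ∈ -U, t x = 0 := by
  classical
  -- The order only serves to choose one point of each pair `{x, -x}`.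
  let _ : LinearOrder X := IsWellOrder.linearOrder WellOrderingRel
  have h_disj (x : X) (hx : x ∈ U) : -x ∉ U := fun hx' => hU.le_bot ⟨hx, hx'⟩
  refine ⟨fun x => if x ∈ U ∨ (-x ∉ U ∧ x < -x) then 1 else 0, fun x hx => ?_, fun x hx => ?_,
    fun x hx => ?_⟩
  · have h_lt : -x < x ↔ ¬ x < -x := ⟨lt_asymm, fun h => (not_lt.1 h).lt_of_ne' hx⟩
    have := h_disj x
    simp only [neg_neg, h_lt]
    split_ifs <;> first | decide | tauto
  · simp [hx]
  · have hx : -x ∈ U := hx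
    have := h_disj _ hx
    simp_all

theorem exists_antipodal_labels {X : Type*} [InvolutiveNeg X] {d : ℕ} {U : Fin d → Set X}
    (hU : ∀ i, Disjoint (U i) (-U i)) :
    ∃ s : ℕ → X → ZMod 2, (∀ k, ∀ x, x ≠ -x → s k (-x) = s k x + 1) ∧
      ∀ i : Fin d, (∀ x ∈ U i, s i x = 1) ∧ ∀ x ∈ -U i, s i x = 0 := by
  suffices h : ∀ k : ℕ, ∃ t : X → ZMod 2, (∀ x, x ≠ -x → t (-x) = t x + 1) ∧
      ∀ i : Fin d, k = i → (∀ x ∈ U i, t x = 1) ∧ ∀ x ∈ -U i, t x = 0 by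
    choose s hs_neg hs using h
    exact ⟨s, hs_neg, fun i => hs i i rfl⟩
  intro k
  rcases lt_or_ge k d with hk | hk
  · obtain ⟨t, ht_neg, ht⟩ := exists_antipodal_label (hU ⟨k, hk⟩)
    refine ⟨t, ht_neg, ?_⟩
    rintro i rfl
    exact ht
  · obtain ⟨t, ht_neg, -⟩ := exists_antipodal_label (X := X) (U := ∅) (by simp)
    exact ⟨t, ht_neg, fun i hi => absurd i.2 (by omega)⟩

theorem exists_forall_notMem_span (K E : Type*) [DivisionRing K] [AddCommGroup E] [Module K E]
    [FiniteDimensional K E] :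
    ∃ v : ℕ → E, ∀ k < Module.finrank K E, v k ∉ Submodule.span K (v '' Iio k) := by
  let b := Module.finBasis K E
  refine ⟨fun k => if h : k < Module.finrank K E then b ⟨k, h⟩ else 0, fun k hk h_mem => ?_⟩
  refine b.linearIndependent.notMem_span_image (x := ⟨k, hk⟩) (s := Iio ⟨k, hk⟩) (by simp) ?_
  simp only [dif_pos hk] at h_mem
  refine Submodule.span_mono ?_ h_mem
  rintro _ ⟨j, hj, rfl⟩
  exact ⟨⟨j, (mem_Iio.1 hj).trans hk⟩, hj, by simp [(mem_Iio.1 hj).trans hk]⟩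

open ListChain Module

theorem coboundaryProd_subdivide_pow_hemisphere {E : Type*} [SeminormedAddCommGroup E]
    [NormedSpace ℝ E] {s : ℕ → E → ZMod 2} (hs : ∀ k, ∀ x ≠ 0, s k (-x) = s k x + 1) {v : ℕ → E}
    {n : ℕ} (hv : ∀ k ≤ n, v k ∉ Submodule.span ℝ (v '' Iio k)) (m : ℕ) :
    coboundaryProd s n ((subdivide ^ m) (hemisphere v n)) = 1 := by
  refine coboundaryProd_eq_one (V := {0}ᶜ) (T := Neg.neg)
    (h := fun k => (subdivide ^ m) (hemisphere v k)) hs (fun k hk => ?_) (fun k => ?_) ?_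
  · exact subdivide_pow_mem_chainsIn (chainsOn_mono (fun l hl => Subset.trans hl fun _ => And.right)
      (hemisphere_mem_chainsOn hv hk.le)) m
  · have h_boundary := LinearMap.congr_fun (commute_boundary_subdivide.pow_right m).eq
      (hemisphere v (k + 1))
    have h_neg := LinearMap.congr_fun (commute_map_neg_subdivide.pow_right m).eq (hemisphere v k)
    simp only [Module.End.mul_apply] at h_boundary h_neg
    rw [h_boundary, h_neg, boundary_hemisphere_succ, map_add]
  · simp only [hemisphere, cone_of, subdivide_pow_of_singleton, coboundaryProd_zero_of]
    rfl

theorem coboundaryProd_eq_zero_of_subordinate {X ι : Type*} {s : ℕ → X → ZMod 2} {d : ℕ}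
    {U : ι → Set X} (hU : ∀ i, ∃ k < d, ∃ a, ∀ x ∈ U i, s k x = a) {c : ListChain X}
    (hc : c ∈ chainsOn {l | l = [] ∨ ∃ i, ∀ x ∈ l, x ∈ U i}) : coboundaryProd s d c = 0 := by
  refine eqOn_chainsOn (g := 0) ?_ hc
  rintro l (rfl | ⟨i, hi⟩)
  · exact coboundaryProd_of_nil s d
  · obtain ⟨k, hk, a, ha⟩ := hU i
    exact coboundaryProd_eq_zero hk (of_mem_chainsOn fun x hx => ha x (hi x hx))

theorem exists_ne_zero_forall_notMem_of_disjoint_neg {E : Type*} [NormedAddCommGroup E]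
    [NormedSpace ℝ E] {d : ℕ} (hd : d < finrank ℝ E) {U : Fin d → Set E}
    (hU_open : ∀ i, IsOpen (U i)) (hU : ∀ i, Disjoint (U i) (-U i)) :
    ∃ x ≠ 0, ∀ i, x ∉ U i ∧ x ∉ -U i := by
  by_contra! h_cover
  have : FiniteDimensional ℝ E := FiniteDimensional.of_finrank_pos (by omega)
  have : IsAddTorsionFree E := .of_isTorsionFree ℝ E
  obtain ⟨v, hv⟩ := exists_forall_notMem_span ℝ E
  obtain ⟨s, hs_neg, hs⟩ := exists_antipodal_labels hU
  have hv_le (k : ℕ) (hk : k ≤ d) : v k ∉ Submodule.span ℝ (v '' Iio k) := hv k (hk.trans_lt hd)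
  let W : Fin d ⊕ Fin d → Set E := Sum.elim U fun i => -U i
  have hW_open (i) : IsOpen (W i) := Sum.rec hU_open (fun i => (hU_open i).neg) i
  have hW_const (i) : ∃ k < d, ∃ a, ∀ x ∈ W i, s k x = a := by
    rcases i with i | i
    exacts [⟨i, i.2, 1, (hs i).1⟩, ⟨i, i.2, 0, (hs i).2⟩]
  have hW_cover : {0}ᶜ ⊆ ⋃ i, W i := fun x hx => by
    obtain ⟨i, hi⟩ := h_cover x hx
    by_cases hxi : x ∈ U i
    exacts [mem_iUnion.2 ⟨.inl i, hxi⟩, mem_iUnion.2 ⟨.inr i, hi hxi⟩]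
  obtain ⟨m, hm⟩ := exists_subdivide_pow_subordinate hW_open <| chainsOn_mono
    (fun l hl => Subset.trans hl (Subset.trans (fun _ => And.right) hW_cover))
    (hemisphere_mem_chainsOn hv_le le_rfl)
  have h_one := coboundaryProd_subdivide_pow_hemisphere (s := s)
    (fun k x hx => hs_neg k x (self_ne_neg.2 hx)) hv_le m
  exact one_ne_zero (h_one.symm.trans (coboundaryProd_eq_zero_of_subordinate hW_const hm))

theorem exists_ne_zero_forall_eq_zero_of_odd {E : Type*} [NormedAddCommGroup E] [NormedSpace ℝ E]
    {d : ℕ} (hd : d < finrank ℝ E) {φ : Fin d → E → ℝ} (hφ : ∀ i, ContinuousOn (φ i) {0}ᶜ)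
    (h_odd : ∀ i x, φ i (-x) = -φ i x) : ∃ x ≠ 0, ∀ i, φ i x = 0 := by
  let U (i : Fin d) : Set E := {0}ᶜ ∩ φ i ⁻¹' Ioi 0
  have h_neg (i) (x : E) : x ∈ -U i ↔ x ≠ 0 ∧ φ i x < 0 := by simp [U, h_odd]
  obtain ⟨x, hx, hxU⟩ := exists_ne_zero_forall_notMem_of_disjoint_neg hd (U := U)
    (fun i => (hφ i).isOpen_inter_preimage isOpen_compl_singleton isOpen_Ioi)
    fun i => disjoint_left.2 fun x hx hx' => lt_asymm hx.2 ((h_neg i x).1 hx').2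
  refine ⟨x, hx, fun i => le_antisymm ?_ ?_⟩
  · exact not_lt.1 fun h => (hxU i).1 ⟨hx, h⟩
  · exact not_lt.1 fun h => (hxU i).2 ((h_neg i x).2 ⟨hx, h⟩)

theorem borsuk_ulam {E F : Type*} [NormedAddCommGroup E] [NormedSpace ℝ E]
    [AddCommGroup F] [Module ℝ F] [TopologicalSpace F] [IsTopologicalAddGroup F]
    [ContinuousSMul ℝ F] [T2Space F] [FiniteDimensional ℝ F] (h_dim : finrank ℝ F < finrank ℝ E)
    {f : E → F} (hf : ContinuousOn f (Metric.sphere 0 1)) :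
    ∃ x ∈ Metric.sphere (0 : E) 1, f x = f (-x) := by
  let b := finBasis ℝ F
  have h_normalize : ContinuousOn (fun x : E => ‖x‖⁻¹ • x) {0}ᶜ :=
    (continuousOn_id.norm.inv₀ fun x hx => norm_ne_zero_iff.2 hx).smul continuousOn_id
  have h_unit (x : E) (hx : x ≠ 0) : ‖x‖⁻¹ • x ∈ Metric.sphere (0 : E) 1 := by
    simp [norm_smul, hx]
  have h_diff : ContinuousOn (fun x => f (‖x‖⁻¹ • x) - f (-(‖x‖⁻¹ • x))) {0}ᶜ :=
    (hf.comp h_normalize h_unit).sub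
      (hf.comp h_normalize.neg fun x hx => by simpa using h_unit x hx)
  obtain ⟨x, hx, h_zero⟩ := exists_ne_zero_forall_eq_zero_of_odd h_dim
    (φ := fun i x => b.coord i (f (‖x‖⁻¹ • x) - f (-(‖x‖⁻¹ • x))))
    (fun i => (b.coord i).continuous_of_finiteDimensional.comp_continuousOn h_diff)
    fun i x => by simp
  exact ⟨_, h_unit x hx, sub_eq_zero.1 (b.forall_coord_eq_zero_iff.1 h_zero)⟩

end BorsukUlam

section Tripod

/-- The excess of the `i`-th coordinate over the larger of the other two. -/
def leadOf (a : Fin 3 → ℝ) (i : Fin 3) : ℝ := min (a i - a (i + 1)) (a i - a (i + 2))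

theorem le_leadOf_iff {a : Fin 3 → ℝ} {i : Fin 3} {t : ℝ} :
    t ≤ leadOf a i ↔ ∀ j ≠ i, t ≤ a i - a j := by
  have h_univ : ∀ i j : Fin 3, j ≠ i ↔ j = i + 1 ∨ j = i + 2 := by decide
  simp [leadOf, h_univ]

theorem leadOf_nonpos {a : Fin 3 → ℝ} {i j : Fin 3} (hij : j ≠ i) (h : a i ≤ a j) :
    leadOf a i ≤ 0 :=
  (le_leadOf_iff.1 le_rfl j hij).trans (sub_nonpos.2 h)

/-- The map from `ℝ³` to the tripod that places a point on the leg of its largest coordinate, at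
distance the lead of that coordinate over the others, cut off at `1`. -/
noncomputable def toTripod (a : Fin 3 → ℝ) : TripodSet :=
  ⟨fun i => projIcc 0 1 zero_le_one (leadOf a i), fun i => Subtype.coe_prop _, fun i j hij => by
    rcases le_total (a i) (a j) with h | h
    · exact .inl (by simp [projIcc_of_le_left, leadOf_nonpos hij.symm h])
    · exact .inr (by simp [projIcc_of_le_left, leadOf_nonpos hij h])⟩

theorem toTripod_apply (a : Fin 3 → ℝ) (i : Fin 3) :
    (toTripod a).1 i = max 0 (min 1 (leadOf a i)) :=
  coe_projIcc _ _ zero_le_one _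

theorem continuous_toTripod : Continuous toTripod := by
  refine Continuous.subtype_mk (continuous_pi fun i => ?_) _
  refine continuous_subtype_val.comp (continuous_projIcc.comp ?_)
  unfold leadOf
  fun_prop

theorem toTripod_eq_zero {a : Fin 3 → ℝ} {i j : Fin 3} (hij : j ≠ i) (h : a i ≤ a j) :
    (toTripod a).1 i = 0 := by
  rw [toTripod_apply, max_eq_left (min_le_of_right_le (leadOf_nonpos hij h))]

theorem min_one_le_toTripod {a : Fin 3 → ℝ} {i : Fin 3} {t : ℝ} (h : ∀ j ≠ i, t ≤ a i - a j) :
    min 1 t ≤ (toTripod a).1 i := by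
  rw [toTripod_apply]
  exact (min_le_min_left 1 (le_leadOf_iff.2 h)).trans (le_max_right _ _)

theorem sub_add_sub_le_tripodDist (x y : TripodSet) {i j : Fin 3} (hij : i ≠ j) :
    (x.1 i - y.1 i) + (y.1 j - x.1 j) ≤ tripodDist x y :=
  calc (x.1 i - y.1 i) + (y.1 j - x.1 j)
      ≤ |x.1 i - y.1 i| + |x.1 j - y.1 j| :=
        add_le_add (le_abs_self _) (abs_sub_comm (x.1 j) (y.1 j) ▸ le_abs_self _)
    _ = ∑ l ∈ {i, j}, |x.1 l - y.1 l| := by rw [Finset.sum_pair hij]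
    _ ≤ tripodDist x y := Finset.sum_le_univ_sum_of_nonneg fun _ => abs_nonneg _

theorem one_le_tripodDist_toTripod_neg {a : Fin 3 → ℝ} {i j : Fin 3} (h : 1 ≤ a i - a j) :
    1 ≤ tripodDist (toTripod a) (toTripod (-a)) := by
  obtain ⟨p, hp⟩ := Finite.exists_max a
  obtain ⟨q, hq⟩ := Finite.exists_min a
  have hpq : 1 ≤ a p - a q := h.trans (sub_le_sub (hp i) (hq j))
  have hpq_ne : p ≠ q := by rintro rfl; norm_num at hpq
  have h_third : ∀ p q : Fin 3, p ≠ q → ∃ k, ∀ l, l = p ∨ l = q ∨ l = k := by decide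
  obtain ⟨k, hk⟩ := h_third p q hpq_ne
  have h_max : min 1 (a p - a k) ≤ (toTripod a).1 p := min_one_le_toTripod fun l hl => by
    rcases (hk l).resolve_left hl with rfl | rfl
    exacts [sub_le_sub_left (hq k) _, le_rfl]
  have h_min : min 1 (a k - a q) ≤ (toTripod (-a)).1 q := min_one_le_toTripod fun l hl => by
    rcases hk l with rfl | h_eq | rfl
    · simp only [Pi.neg_apply]; linarith [hp k]
    · exact absurd h_eq hl
    · simp only [Pi.neg_apply]; linarith
  have h_sum : 1 ≤ min 1 (a p - a k) + min 1 (a k - a q) := by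
    have hpk := hp k
    have hqk := hq k
    grind
  have h_dist := sub_add_sub_le_tripodDist (toTripod a) (toTripod (-a)) hpq_ne
  rw [toTripod_eq_zero (a := -a) hpq_ne.symm (neg_le_neg (hp q)),
    toTripod_eq_zero hpq_ne (hp q)] at h_dist
  linarith

theorem tripodDist_le_tripodDistInf {n : ℕ} (x y : Fin n → TripodSet) (i : Fin n) :
    tripodDist (x i) (y i) ≤ tripodDistInf x y :=
  le_csSup (finite_range _).bddAbove (mem_range_self i)

/-- A continuous map from the plane to the tripod that keeps antipodal points of norm at least one
at distance at least one. -/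
noncomputable def planeToTripod (z : ℝ × ℝ) : TripodSet := toTripod ![0, z.1, z.2]

theorem continuous_planeToTripod : Continuous planeToTripod :=
  continuous_toTripod.comp <| continuous_pi fun i => by
    fin_cases i
    exacts [continuous_const, continuous_fst, continuous_snd]

theorem one_le_tripodDist_planeToTripod_neg {z : ℝ × ℝ} (hz : 1 ≤ ‖z‖) :
    1 ≤ tripodDist (planeToTripod z) (planeToTripod (-z)) := by
  rw [show planeToTripod (-z) = toTripod (-![0, z.1, z.2]) by simp [planeToTripod]]
  have h_large : 1 ≤ |z.1| ∨ 1 ≤ |z.2| := by simpa [Prod.norm_def] using hz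
  rcases h_large.imp le_abs.1 le_abs.1 with (h | h) | (h | h)
  · exact one_le_tripodDist_toTripod_neg (i := 1) (j := 0) (by simpa using h)
  · exact one_le_tripodDist_toTripod_neg (i := 0) (j := 1) (by simpa using h)
  · exact one_le_tripodDist_toTripod_neg (i := 2) (j := 0) (by simpa using h)
  · exact one_le_tripodDist_toTripod_neg (i := 0) (j := 2) (by simpa using h)

end Tripod

theorem tripod_power_no_eps_embedding_into_cube_general {F : Type*} [AddCommGroup F] [Module ℝ F]
    [TopologicalSpace F] [IsTopologicalAddGroup F] [ContinuousSMul ℝ F] [T2Space F]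
    [FiniteDimensional ℝ F] {n : ℕ} (h_dim : Module.finrank ℝ F < 2 * n) {ε : ℝ} (hε : ε ≤ 1) :
    ¬ ∃ f : (Fin n → TripodSet) → F,
        Continuous f ∧ ∀ x y, f x = f y → tripodDistInf x y < ε := by
  rintro ⟨f, hf, h_emb⟩
  let Ψ (z : Fin n → ℝ × ℝ) (i : Fin n) : TripodSet := planeToTripod (z i)
  have hΨ : Continuous Ψ :=
    continuous_pi fun i => continuous_planeToTripod.comp (continuous_apply i)
  have h_finrank : Module.finrank ℝ (Fin n → ℝ × ℝ) = 2 * n := by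
    simp [Module.finrank_pi_fintype, mul_comm]
  obtain ⟨z, hz, h_eq⟩ := borsuk_ulam (h_dim.trans_eq h_finrank.symm)
    (hf.comp hΨ).continuousOn
  obtain ⟨i, hi⟩ : ∃ i, 1 ≤ ‖z i‖ := by
    have h_norm : ‖z‖ = 1 := mem_sphere_zero_iff_norm.1 hz
    by_contra! h_lt
    exact h_norm.not_lt ((pi_norm_lt_iff one_pos).2 h_lt)
  refine (h_emb (Ψ z) (Ψ (-z)) h_eq).not_ge ?_
  calc ε ≤ 1 := hε
    _ ≤ tripodDist (Ψ z i) (Ψ (-z) i) := one_le_tripodDist_planeToTripod_neg hi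
    _ ≤ tripodDistInf (Ψ z) (Ψ (-z)) := tripodDist_le_tripodDistInf _ _ i

/-- **Lemma (used in Part 4).** For every `ε ∈ (0,1)`, every `n ≥ 1` and every finite index
set `ι` with `|ι| ≤ 2n - 1`, there is no `ε`-embedding of `(P^n, d_{l^∞})` into `[0,1]^ι`,
where `P` is the tripod with the graph distance. -/
theorem tripod_power_no_eps_embedding_into_cube (ε : ℝ) (hε0 : 0 < ε) (hε1 : ε < 1)
    (n : ℕ) (hn : 0 < n) (ι : Type*) [Fintype ι] (hcard : Fintype.card ι ≤ 2 * n - 1) :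
    ¬ ∃ f : (Fin n → ↥TripodSet) → (ι → Set.Icc (0 : ℝ) 1),
        Continuous f ∧ ∀ x y, f x = f y → tripodDistInf x y < ε := by
  rintro ⟨f, hf, h_emb⟩
  refine tripod_power_no_eps_embedding_into_cube_general (F := ι → ℝ) (n := n) ?_ hε1.le
    ⟨fun x i => f x i, by fun_prop, fun x y h => h_emb x y ?_⟩
  · rw [Module.finrank_fintype_fun_eq_card]
    omega
  · exact funext fun i => Subtype.ext (congrFun h i)
end
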